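/- arXiv:2605.02349 — 10 statements merged into one kernel-verified Lean document; each statement's English description precedes it below -/
import Mathlib

section
/- Let A be a positive trace-class operator and B a positive bounded operator on a complex Hilbert space H. Then the operator (A^2 + B^2)^{1/2} − B is positive and trace class, and Tr[(A^2 + B^2)^{1/2} − B] ≤ Tr[A]. -/
set_option synthInstance.maxHeartbeats 1000000
set_option maxHeartbeats 1000000

open scoped InnerProductSpace

section TraceSetup

variable (H : Type*) [NormedAddCommGroup H] [InnerProductSpace ℂ H] [CompleteSpace H]

/-- A fixed Hilbert basis of `H`, used to define the trace. -/
noncomputable def traceBasis : HilbertBasis (exists_hilbertBasis ℂ H).choose ℂ H :=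
  (exists_hilbertBasis ℂ H).choose_spec.choose

variable {H}

/-- The diagonal of an operator with respect to the chosen Hilbert basis. -/
noncomputable def opDiag (A : H →L[ℂ] H) (i : (exists_hilbertBasis ℂ H).choose) : ℝ :=
  (⟪traceBasis H i, A (traceBasis H i)⟫_ℂ).re

/-- The trace of an operator: the sum of its diagonal with respect to the chosen Hilbert
basis.  For a trace-class operator this agrees with the usual trace. -/
noncomputable def opTrace (A : H →L[ℂ] H) : ℝ := ∑' i, opDiag A i

/-- An operator is a positive trace-class operator iff it is positive (for the Loewner order,
i.e. self-adjoint with nonnegative quadratic form) and its diagonal is summable. -/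
def IsPosTraceClass (A : H →L[ℂ] H) : Prop := 0 ≤ A ∧ Summable (opDiag A)

/-- `A` is Hilbert–Schmidt iff `A* A` has finite trace. -/
def IsHilbertSchmidt (A : H →L[ℂ] H) : Prop := Summable (opDiag (star A * A))

/-- The Hilbert–Schmidt norm `‖A‖_HS = (Tr[A* A])^{1/2}`. -/
noncomputable def hsNorm (A : H →L[ℂ] H) : ℝ := Real.sqrt (opTrace (star A * A))

end TraceSetup

/-!
Put `C = (A² + B²)^{1/2}`, `D = C - B` and `N = C + B`. Then `D` solves the Lyapunov equation
`N D + D N = 2 A²`, and formally `Tr D = Tr (A N⁻¹ A) ≤ Tr A`, because `A ≤ C ≤ N`. To make this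
rigorous when `D` is not known to be trace class and `N` is not invertible, pass to the Cayley
transform `V = (N - 1) (N + 1)⁻¹`, which turns the equation into the Stein equation
`D = V D V + (1 - V) A² (1 - V)`. Iterating it expresses `D` through the positive operators
`Rₖ A² Rₖ`, where `Rₖ = Vᵏ (1 - V)`, with remainder `Vⁿ D Vⁿ`. The remainder tends to zero weakly
since `D ≤ N`, while `Tr (Rₖ A² Rₖ) = Tr (A Rₖ² A)` and the partial sums of `∑ Rₖ²` are
dominated by `N⁻¹`.
-/

open Filter Finset RCLike Topology

section Ring

variable {𝓐 : Type*} [Ring 𝓐]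

theorem commute_pow_one_sub (V : 𝓐) (k : ℕ) : Commute (V ^ k) (1 - V) :=
  ((Commute.one_right V).sub_right rfl).pow_left k

theorem eq_pow_mul_mul_pow_add_sum {D V Y : 𝓐} (h : D = V * D * V + Y) (n : ℕ) :
    D = V ^ n * D * V ^ n + ∑ k ∈ range n, V ^ k * Y * V ^ k := by
  induction n with
  | zero => simp
  | succ n ih =>
    calc D = V ^ n * D * V ^ n + ∑ k ∈ range n, V ^ k * Y * V ^ k := ih
      _ = V ^ n * (V * D * V + Y) * V ^ n + ∑ k ∈ range n, V ^ k * Y * V ^ k := by rw [← h]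
      _ = _ := by
        rw [sum_range_succ, mul_add, add_mul, add_assoc, add_comm (V ^ n * Y * V ^ n)]
        congr 1
        simp only [pow_succ V n, mul_assoc, ← pow_succ']

theorem add_mul_sub_add_sub_mul_add (B C : 𝓐) :
    (C + B) * (C - B) + (C - B) * (C + B) = 2 • (C ^ 2 - B ^ 2) := by
  noncomm_ring

/-- `V` is the Cayley transform `(N - 1) (N + 1)⁻¹` of `N`. The two equations determine `V` when
`N + 1` is invertible, and stating them this way keeps inverses out of the algebra. -/
structure IsCayleyTransform (N V : 𝓐) : Prop where
  mul_one_sub : N * (1 - V) = 1 + V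
  one_sub_mul : (1 - V) * N = 1 + V

namespace IsCayleyTransform

variable {N V D X : 𝓐}

theorem one_sub_mul_mul_one_sub (h : IsCayleyTransform N V) :
    (1 - V) * N * (1 - V) = 1 - V ^ 2 := by
  rw [h.one_sub_mul]
  noncomm_ring

theorem one_sub_mul_one_add (h : IsCayleyTransform N V) : (1 - V) * (1 + N) = 2 := by
  rw [mul_add, mul_one, h.one_sub_mul, sub_add_add_cancel, one_add_one_eq_two]

theorem stein_of_lyapunov [IsAddTorsionFree 𝓐] (h : IsCayleyTransform N V)
    (hD : N * D + D * N = 2 • X) : D = V * D * V + (1 - V) * X * (1 - V) := by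
  have hdouble : 2 • ((1 - V) * X * (1 - V)) = 2 • (D - V * D * V) :=
    calc 2 • ((1 - V) * X * (1 - V)) = (1 - V) * (2 • X) * (1 - V) := by noncomm_ring
      _ = (1 - V) * N * (D * (1 - V)) + (1 - V) * D * (N * (1 - V)) := by
        rw [← hD]
        noncomm_ring
      _ = 2 • (D - V * D * V) := by
        rw [h.mul_one_sub, h.one_sub_mul]
        noncomm_ring
  rw [nsmul_right_injective two_ne_zero hdouble, add_sub_cancel]

theorem eq_add_sum_of_lyapunov [IsAddTorsionFree 𝓐] (h : IsCayleyTransform N V)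
    (hD : N * D + D * N = 2 • X) (n : ℕ) :
    D = V ^ n * D * V ^ n + ∑ k ∈ range n, V ^ k * (1 - V) * X * (V ^ k * (1 - V)) := by
  have hterm (k : ℕ) : V ^ k * ((1 - V) * X * (1 - V)) * V ^ k =
      V ^ k * (1 - V) * X * (V ^ k * (1 - V)) := by
    nth_rw 2 [(commute_pow_one_sub V k).eq]
    simp only [mul_assoc]
  simpa only [hterm] using eq_pow_mul_mul_pow_add_sum (h.stein_of_lyapunov hD) n

theorem sum_sq_mul (h : IsCayleyTransform N V) (n : ℕ) :
    (∑ k ∈ range n, (V ^ k * (1 - V)) ^ 2) * N = 1 - (V ^ 2) ^ n := by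
  have hterm (k : ℕ) : (V ^ k * (1 - V)) ^ 2 * N = (V ^ 2) ^ k * (1 - V ^ 2) := by
    rw [(commute_pow_one_sub V k).mul_pow, mul_assoc, sq (1 - V), mul_assoc, h.one_sub_mul,
      ← pow_mul, ← pow_mul, mul_comm k]
    noncomm_ring
  rw [sum_mul, sum_congr rfl fun k _ => hterm k, ← sum_mul, geom_sum_mul_neg]

end IsCayleyTransform

end Ring

theorem isSelfAdjoint_pow_mul_one_sub {𝓐 : Type*} [Ring 𝓐] [StarRing 𝓐] {V : 𝓐}
    (hV : IsSelfAdjoint V) (k : ℕ) : IsSelfAdjoint (V ^ k * (1 - V)) :=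
  ((hV.pow k).commute_iff ((IsSelfAdjoint.one 𝓐).sub hV)).1 (commute_pow_one_sub V k)

section StarOrderedRing

variable {𝓐 : Type*} [Ring 𝓐] [PartialOrder 𝓐] [StarRing 𝓐] [StarOrderedRing 𝓐] {A E N V : 𝓐}

-- Expand `0 ≤ (1 - A E) A (1 - E A)` and bound its last term by `A E N E A ≤ A E A`.
theorem mul_mul_self_le_self (hA : 0 ≤ A) (hAN : A ≤ N) (hE : IsSelfAdjoint E)
    (hENE : E * N * E ≤ E) : A * E * A ≤ A := by
  have hA' : IsSelfAdjoint A := .of_nonneg hA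
  have hquad : 0 ≤ (1 - A * E) * A * (1 - E * A) := by
    simpa [hA'.star_eq, hE.star_eq] using star_right_conjugate_nonneg hA (1 - A * E)
  have hlast : A * (E * A * E) * A ≤ A * E * A :=
    hA'.conjugate_le_conjugate ((hE.conjugate_le_conjugate hAN).trans hENE)
  have hexpand : (1 - A * E) * A * (1 - E * A) =
      A - A * E * A - (A * E * A - A * (E * A * E) * A) := by noncomm_ring
  rw [hexpand, sub_nonneg] at hquad
  exact sub_nonneg.1 ((sub_nonneg.2 hlast).trans hquad)

theorem IsCayleyTransform.sum_sq_mul_mul_sum_sq_le (h : IsCayleyTransform N V)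
    (hV : IsSelfAdjoint V) (n : ℕ) :
    (∑ k ∈ range n, (V ^ k * (1 - V)) ^ 2) * N * (∑ k ∈ range n, (V ^ k * (1 - V)) ^ 2) ≤
      ∑ k ∈ range n, (V ^ k * (1 - V)) ^ 2 := by
  have hE : 0 ≤ ∑ k ∈ range n, (V ^ k * (1 - V)) ^ 2 :=
    sum_nonneg fun k _ => (isSelfAdjoint_pow_mul_one_sub hV k).sq_nonneg
  have hcomm : Commute (V ^ n) (∑ k ∈ range n, (V ^ k * (1 - V)) ^ 2) :=
    Commute.sum_right _ _ _ fun k _ =>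
      (((Commute.refl V).pow_pow n k).mul_right (commute_pow_one_sub V n)).pow_right 2
  rw [h.sum_sq_mul, sub_mul, one_mul, sub_le_self_iff, ← pow_mul, two_mul, pow_add, mul_assoc,
    hcomm.eq, ← mul_assoc]
  exact (hV.pow n).conjugate_nonneg hE

theorem IsCayleyTransform.sum_mul_star_le (h : IsCayleyTransform N V) (hV : IsSelfAdjoint V)
    (hA : 0 ≤ A) (hAN : A ≤ N) (n : ℕ) :
    ∑ k ∈ range n, A * (V ^ k * (1 - V)) * star (A * (V ^ k * (1 - V))) ≤ A := by
  have hterm (k : ℕ) : A * (V ^ k * (1 - V)) * star (A * (V ^ k * (1 - V))) =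
      A * (V ^ k * (1 - V)) ^ 2 * A := by
    rw [star_mul, (IsSelfAdjoint.of_nonneg hA).star_eq,
      (isSelfAdjoint_pow_mul_one_sub hV k).star_eq, sq (V ^ k * (1 - V))]
    simp only [mul_assoc]
  rw [sum_congr rfl fun k _ => hterm k, ← sum_mul, ← mul_sum]
  exact mul_mul_self_le_self hA hAN
    (isSelfAdjoint_sum _ fun k _ => (isSelfAdjoint_pow_mul_one_sub hV k).pow 2)
    (h.sum_sq_mul_mul_sum_sq_le hV n)

end StarOrderedRing

section CStarAlgebra

variable {𝓐 : Type*} [CStarAlgebra 𝓐] [PartialOrder 𝓐] [StarOrderedRing 𝓐] {A B N : 𝓐}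

theorem le_sqrt_sq_add_sq (hA : IsSelfAdjoint A) (hB : 0 ≤ B) : B ≤ CFC.sqrt (A ^ 2 + B ^ 2) :=
  calc B = CFC.sqrt (B ^ 2) := (CFC.sqrt_sq B hB).symm
    _ ≤ CFC.sqrt (A ^ 2 + B ^ 2) := CFC.sqrt_le_sqrt _ _ (le_add_of_nonneg_left hA.sq_nonneg)

theorem exists_isSelfAdjoint_isCayleyTransform (hN : 0 ≤ N) :
    ∃ V : 𝓐, IsSelfAdjoint V ∧ IsCayleyTransform N V := by
  have hunit : IsUnit (1 + N) := CStarAlgebra.isUnit_of_le 1 (le_add_of_nonneg_right hN)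
  obtain ⟨W, hW, hleft, hright⟩ :
      ∃ W : 𝓐, IsSelfAdjoint W ∧ W * (1 + N) = 1 ∧ (1 + N) * W = 1 :=
    ⟨Ring.inverse (1 + N), ((IsSelfAdjoint.one 𝓐).add (.of_nonneg hN)).ringInverse,
      Ring.inverse_mul_cancel _ hunit, Ring.mul_inverse_cancel _ hunit⟩
  have hWN : W * N = 1 - W := by rw [← hleft]; noncomm_ring
  have hNW : N * W = 1 - W := by rw [← hright]; noncomm_ring
  refine ⟨1 - (W + W), (IsSelfAdjoint.one 𝓐).sub (hW.add hW), ⟨?_, ?_⟩⟩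
  · rw [sub_sub_cancel, mul_add, hNW]
    abel
  · rw [sub_sub_cancel, add_mul, hWN]
    abel

end CStarAlgebra

theorem tendsto_sub_succ_of_antitone {u : ℕ → ℝ} (hu : Antitone u) (hbdd : BddBelow (Set.range u)) :
    Tendsto (fun n => u n - u (n + 1)) atTop (𝓝 0) := by
  have hlim := tendsto_atTop_ciInf hu hbdd
  simpa using hlim.sub (hlim.comp (tendsto_add_atTop_nat 1))

theorem ofReal_sum_norm_sq {κ E : Type*} [SeminormedAddGroup E] (s : Finset κ) (f : κ → E) :
    ENNReal.ofReal (∑ k ∈ s, ‖f k‖ ^ 2) = ∑ k ∈ s, ‖f k‖ₑ ^ 2 := by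
  rw [ENNReal.ofReal_sum_of_nonneg fun _ _ => by positivity]
  simp only [ENNReal.ofReal_pow (norm_nonneg _), ofReal_norm]

section RCLike

variable {𝕜 H ι : Type*} [RCLike 𝕜] [NormedAddCommGroup H] [InnerProductSpace 𝕜 H]

theorem re_inner_apply_le_re_inner_apply {S T : H →L[𝕜] H} (h : S ≤ T) (x : H) :
    re ⟪x, S x⟫_𝕜 ≤ re ⟪x, T x⟫_𝕜 := by
  simpa [inner_sub_right] using ((ContinuousLinearMap.le_def S T).1 h).re_inner_nonneg_right x

theorem tsum_enorm_inner_sq (b : HilbertBasis ι 𝕜 H) (x : H) :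
    ∑' i, ‖⟪b i, x⟫_𝕜‖ₑ ^ 2 = ‖x‖ₑ ^ 2 := by
  have hsum : HasSum (fun i => ‖⟪b i, x⟫_𝕜‖ ^ 2) (‖x‖ ^ 2) := by
    have := RCLike.hasSum_re 𝕜 (b.hasSum_inner_mul_inner x x)
    simpa only [inner_mul_symm_re_eq_norm, norm_mul, norm_inner_symm x, ← sq,
      inner_self_eq_norm_sq] using this
  simp only [← ofReal_norm, ← ENNReal.ofReal_pow (norm_nonneg _)]
  rw [← hsum.tsum_eq, ENNReal.ofReal_tsum_of_nonneg (fun _ => by positivity) hsum.summable]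

variable [CompleteSpace H]

theorem re_inner_star_mul_self_apply (S : H →L[𝕜] H) (x : H) :
    re ⟪x, (star S * S) x⟫_𝕜 = ‖S x‖ ^ 2 := by
  rw [mul_apply_eq_comp, ContinuousLinearMap.star_eq_adjoint,
    ContinuousLinearMap.adjoint_inner_right, inner_self_eq_norm_sq]

theorem re_inner_conj_apply {Q : H →L[𝕜] H} (hQ : IsSelfAdjoint Q) (T : H →L[𝕜] H) (x : H) :
    re ⟪x, (Q * T * Q) x⟫_𝕜 = re ⟪Q x, T (Q x)⟫_𝕜 :=
  congrArg re (hQ.isSymmetric x (T (Q x))).symm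

theorem tsum_enorm_star_apply_sq (b : HilbertBasis ι 𝕜 H) (S : H →L[𝕜] H) :
    ∑' i, ‖(star S) (b i)‖ₑ ^ 2 = ∑' i, ‖S (b i)‖ₑ ^ 2 := by
  simp_rw [← tsum_enorm_inner_sq b (S _), ← tsum_enorm_inner_sq b ((star S) _)]
  rw [ENNReal.tsum_comm]
  refine tsum_congr fun i => tsum_congr fun j => ?_
  rw [ContinuousLinearMap.star_eq_adjoint, ContinuousLinearMap.adjoint_inner_right,
    ← ofReal_norm, norm_inner_symm, ofReal_norm]

theorem sum_sum_norm_sq_le_tsum (b : HilbertBasis ι 𝕜 H) {κ : Type*} {s : Finset κ}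
    {S : κ → H →L[𝕜] H} {T : H →L[𝕜] H} (hST : ∑ k ∈ s, S k * star (S k) ≤ T)
    (hT : Summable fun i => re ⟪b i, T (b i)⟫_𝕜) (G : Finset ι) :
    ∑ i ∈ G, ∑ k ∈ s, ‖S k (b i)‖ ^ 2 ≤ ∑' i, re ⟪b i, T (b i)⟫_𝕜 := by
  have hdiag (i : ι) : ∑ k ∈ s, ‖star (S k) (b i)‖ ^ 2 ≤ re ⟪b i, T (b i)⟫_𝕜 := by
    have hle := re_inner_apply_le_re_inner_apply hST (b i)
    rw [_root_.sum_apply, inner_sum, map_sum] at hle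
    refine le_of_eq_of_le (sum_congr rfl fun k _ => ?_) hle
    rw [← re_inner_star_mul_self_apply, star_star]
  have hdiag_nonneg (i : ι) : 0 ≤ re ⟪b i, T (b i)⟫_𝕜 :=
    (sum_nonneg fun k _ => sq_nonneg _).trans (hdiag i)
  rw [← ENNReal.ofReal_le_ofReal_iff (tsum_nonneg hdiag_nonneg)]
  calc ENNReal.ofReal (∑ i ∈ G, ∑ k ∈ s, ‖S k (b i)‖ ^ 2)
      = ∑ i ∈ G, ∑ k ∈ s, ‖S k (b i)‖ₑ ^ 2 := by
        rw [ENNReal.ofReal_sum_of_nonneg fun _ _ => by positivity]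
        exact sum_congr rfl fun i _ => ofReal_sum_norm_sq s _
    _ ≤ ∑' i, ∑ k ∈ s, ‖S k (b i)‖ₑ ^ 2 := ENNReal.sum_le_tsum G
    _ = ∑' i, ∑ k ∈ s, ‖star (S k) (b i)‖ₑ ^ 2 := by
        rw [Summable.tsum_finsetSum fun _ _ => ENNReal.summable,
          Summable.tsum_finsetSum fun _ _ => ENNReal.summable]
        exact sum_congr rfl fun k _ => (tsum_enorm_star_apply_sq b (S k)).symm
    _ ≤ ∑' i, ENNReal.ofReal (re ⟪b i, T (b i)⟫_𝕜) := by
        gcongr with i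
        rw [← ofReal_sum_norm_sq]
        exact ENNReal.ofReal_le_ofReal (hdiag i)
    _ = ENNReal.ofReal (∑' i, re ⟪b i, T (b i)⟫_𝕜) :=
        (ENNReal.ofReal_tsum_of_nonneg hdiag_nonneg hT).symm

variable {A D N V : H →L[𝕜] H}

theorem IsCayleyTransform.re_inner_one_sub_apply (h : IsCayleyTransform N V)
    (hV : IsSelfAdjoint V) (z : H) :
    re ⟪(1 - V) z, N ((1 - V) z)⟫_𝕜 = ‖z‖ ^ 2 - ‖V z‖ ^ 2 := by
  rw [← re_inner_conj_apply ((IsSelfAdjoint.one _).sub hV), h.one_sub_mul_mul_one_sub, sq V]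
  nth_rw 1 [← hV.star_eq]
  rw [sub_apply, inner_sub_right, map_sub, re_inner_star_mul_self_apply,
    one_apply_eq_self, inner_self_eq_norm_sq]

theorem IsCayleyTransform.tendsto_re_inner_pow_apply (h : IsCayleyTransform N V)
    (hV : IsSelfAdjoint V) (hN : 0 ≤ N) (x : H) :
    Tendsto (fun n => re ⟪(V ^ n) x, N ((V ^ n) x)⟫_𝕜) atTop (𝓝 0) := by
  obtain ⟨z, rfl⟩ : ∃ z, (1 - V) z = x := by
    have hinv : (1 - V) * ((2⁻¹ : 𝕜) • (1 + N)) = 1 := by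
      rw [mul_smul_comm, h.one_sub_mul_one_add, inv_smul_eq_iff₀ two_ne_zero, two_smul,
        one_add_one_eq_two]
    exact ⟨((2⁻¹ : 𝕜) • (1 + N)) x, DFunLike.congr_fun hinv x⟩
  have htele (n : ℕ) : re ⟪(V ^ n) ((1 - V) z), N ((V ^ n) ((1 - V) z))⟫_𝕜 =
      ‖(V ^ n) z‖ ^ 2 - ‖(V ^ (n + 1)) z‖ ^ 2 := by
    have hcomm : (V ^ n) ((1 - V) z) = (1 - V) ((V ^ n) z) :=
      DFunLike.congr_fun (commute_pow_one_sub V n).eq z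
    rw [hcomm, h.re_inner_one_sub_apply hV, pow_succ' V, mul_apply_eq_comp]
  simp only [htele]
  refine tendsto_sub_succ_of_antitone (u := fun n => ‖(V ^ n) z‖ ^ 2)
    (antitone_nat_of_succ_le fun n => ?_) ⟨0, by rintro _ ⟨n, rfl⟩; positivity⟩
  rw [← sub_nonneg, ← htele]
  exact ((ContinuousLinearMap.nonneg_iff_isPositive N).1 hN).re_inner_nonneg_right _

theorem IsCayleyTransform.re_inner_apply_eq (h : IsCayleyTransform N V) (hV : IsSelfAdjoint V)
    (hA : IsSelfAdjoint A) (hD : N * D + D * N = 2 • A ^ 2) (n : ℕ) (x : H) :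
    re ⟪x, D x⟫_𝕜 = re ⟪(V ^ n) x, D ((V ^ n) x)⟫_𝕜 +
      ∑ k ∈ range n, ‖(A * (V ^ k * (1 - V))) x‖ ^ 2 := by
  have hterm (k : ℕ) : V ^ k * (1 - V) * A ^ 2 * (V ^ k * (1 - V)) =
      star (A * (V ^ k * (1 - V))) * (A * (V ^ k * (1 - V))) := by
    rw [star_mul, hA.star_eq, (isSelfAdjoint_pow_mul_one_sub hV k).star_eq, sq A]
    simp only [mul_assoc]
  have : IsAddTorsionFree (H →L[𝕜] H) := .of_isTorsionFree 𝕜 _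
  nth_rw 1 [h.eq_add_sum_of_lyapunov hD n]
  simp only [add_apply, _root_.sum_apply, inner_add_right, inner_sum, map_add,
    map_sum, re_inner_conj_apply (hV.pow n), hterm, re_inner_star_mul_self_apply]

end RCLike

theorem sum_re_inner_apply_le_tsum_of_lyapunov {ι H : Type*} [NormedAddCommGroup H]
    [InnerProductSpace ℂ H] [CompleteSpace H] {A D N : H →L[ℂ] H} (b : HilbertBasis ι ℂ H)
    (hA : 0 ≤ A) (hAN : A ≤ N) (hDN : D ≤ N) (hD : N * D + D * N = 2 • A ^ 2)
    (hsum : Summable fun i => re ⟪b i, A (b i)⟫_ℂ) (G : Finset ι) :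
    ∑ i ∈ G, re ⟪b i, D (b i)⟫_ℂ ≤ ∑' i, re ⟪b i, A (b i)⟫_ℂ := by
  have hN : 0 ≤ N := hA.trans hAN
  have hA' : IsSelfAdjoint A := .of_nonneg hA
  obtain ⟨V, hV, hNV⟩ := exists_isSelfAdjoint_isCayleyTransform hN
  have hbound (n : ℕ) : ∑ i ∈ G, re ⟪b i, D (b i)⟫_ℂ ≤
      ∑ i ∈ G, re ⟪(V ^ n) (b i), N ((V ^ n) (b i))⟫_ℂ + ∑' i, re ⟪b i, A (b i)⟫_ℂ := by
    rw [sum_congr rfl fun i _ => hNV.re_inner_apply_eq hV hA' hD n (b i), sum_add_distrib]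
    exact add_le_add (sum_le_sum fun i _ => re_inner_apply_le_re_inner_apply hDN _)
      (sum_sum_norm_sq_le_tsum b (hNV.sum_mul_star_le hV hA hAN n) hsum G)
  have hremainder : Tendsto (fun n => ∑ i ∈ G, re ⟪(V ^ n) (b i), N ((V ^ n) (b i))⟫_ℂ) atTop
      (𝓝 0) := by
    simpa using tendsto_finsetSum G fun i _ => hNV.tendsto_re_inner_pow_apply hV hN (b i)
  exact ge_of_tendsto' (by simpa using hremainder.add_const _) hbound

/-- For `A` positive trace class and `B` positive bounded,
`(A² + B²)^{1/2} − B` is positive trace class and `Tr[(A² + B²)^{1/2} − B] ≤ Tr[A]`. -/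
theorem trace_sqrt_sub_le {H : Type*} [NormedAddCommGroup H] [InnerProductSpace ℂ H]
    [CompleteSpace H] (A B : H →L[ℂ] H) (hA : IsPosTraceClass A) (hB : 0 ≤ B) :
    IsPosTraceClass (CFC.sqrt (A ^ 2 + B ^ 2) - B) ∧
      opTrace (CFC.sqrt (A ^ 2 + B ^ 2) - B) ≤ opTrace A := by
  obtain ⟨hA, hsum⟩ := hA
  have hBC : B ≤ CFC.sqrt (A ^ 2 + B ^ 2) := le_sqrt_sq_add_sq (.of_nonneg hA) hB
  have hAC : A ≤ CFC.sqrt (A ^ 2 + B ^ 2) :=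
    add_comm (B ^ 2) (A ^ 2) ▸ le_sqrt_sq_add_sq (.of_nonneg hB) hA
  have hCsq : CFC.sqrt (A ^ 2 + B ^ 2) ^ 2 = A ^ 2 + B ^ 2 :=
    CFC.sq_sqrt _ (add_nonneg (IsSelfAdjoint.of_nonneg hA).sq_nonneg
      (IsSelfAdjoint.of_nonneg hB).sq_nonneg)
  set C := CFC.sqrt (A ^ 2 + B ^ 2)
  have hlyapunov : (C + B) * (C - B) + (C - B) * (C + B) = 2 • A ^ 2 := by
    rw [add_mul_sub_add_sub_mul_add, hCsq, add_sub_cancel_right]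
  have hpos : 0 ≤ C - B := sub_nonneg.2 hBC
  have hpartial (G : Finset _) : ∑ i ∈ G, opDiag (C - B) i ≤ opTrace A :=
    sum_re_inner_apply_le_tsum_of_lyapunov (traceBasis H) hA
      (hAC.trans (le_add_of_nonneg_right hB))
      ((sub_le_self C hB).trans (le_add_of_nonneg_right hB)) hlyapunov hsum G
  have hdiag : 0 ≤ opDiag (C - B) := fun i =>
    ((ContinuousLinearMap.nonneg_iff_isPositive _).1 hpos).re_inner_nonneg_right _
  have hsummable := summable_of_sum_le hdiag hpartial
  exact ⟨⟨hpos, hsummable⟩, hsummable.tsum_le_of_sum_le hpartial⟩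
end

section
/- Let A be a positive trace-class operator and let B, C be positive bounded operators on a complex Hilbert space H such that B^2 ≤ C^2. Then Tr[(A^2 + C^2)^{1/2} − C] ≤ Tr[(A^2 + B^2)^{1/2} − B], where both (A^2 + B^2)^{1/2} − B and (A^2 + C^2)^{1/2} − C are positive trace-class operators. -/
set_option synthInstance.maxHeartbeats 1000000
set_option maxHeartbeats 1000000

open scoped InnerProductSpace

/-!
For `0 ≤ P` and `0 ≤ X`, put `D = √(P + X) - √X` and `S = √(P + X) + √X`. Then `D` solves the
Sylvester equation `S D + D S = 2 P`. When `S` is invertible, multiplying by `S^{-1/2}` on both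
sides and using cyclicity gives `Tr D = Tr (P^{1/2} S⁻¹ P^{1/2})`, and `S⁻¹` is operator antitone
in `X` because the square root is operator monotone.

Cyclicity uses `Tr D < ∞`, which follows from `Tr P < ∞`: for `r = ‖S‖⁻¹`, `V = 1 - r S` has
`‖V‖ < 1` and `D ≤ 2 r P + V D V`, so iterating bounds `Tr D` by a geometric series.

For general `X`, replace `X` by `X + r` with `r > 0`. This decreases `D`, since
`Z ↦ √(Z + r) - √Z` is operator antitone, and the trace is lower semicontinuous as `r → 0`.
Comparing with `X = 0`, where `√(A²) = A`, gives the trace-class property.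
-/

open scoped ENNReal Ring Topology
open CFC (sqrt conjSqrt conjSqrt_apply)

lemma sub_star_pow_mul_mul_pow_le_sum {R : Type*} [Ring R] [PartialOrder R] [StarRing R]
    [StarOrderedRing R] {d q v : R} (h : d ≤ q + star v * d * v) (n : ℕ) :
    d - star (v ^ n) * d * v ^ n ≤ ∑ k ∈ Finset.range n, star (v ^ k) * q * v ^ k := by
  induction n with
  | zero => simp
  | succ n ih =>
    rw [Finset.sum_range_succ]
    calc d - star (v ^ (n + 1)) * d * v ^ (n + 1)
        = (d - star (v ^ n) * d * v ^ n) + star (v ^ n) * (d - star v * d * v) * v ^ n := by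
          rw [pow_succ', star_mul]
          noncomm_ring
      _ ≤ _ := add_le_add ih (star_left_conjugate_le_conjugate (sub_le_iff_le_add.2 h) _)

section CStarAlgebra

variable {A : Type*} [CStarAlgebra A] [PartialOrder A] [StarOrderedRing A]

lemma conjSqrt_one_of_nonneg {a : A} (ha : 0 ≤ a) : conjSqrt a 1 = a := by
  rw [conjSqrt_apply, mul_one, CFC.sqrt_mul_sqrt_self a ha]

lemma sqrt_add_sub_sqrt_nonneg {p x : A} (hp : 0 ≤ p) : 0 ≤ sqrt (p + x) - sqrt x :=
  sub_nonneg.2 (CFC.sqrt_le_sqrt _ _ (le_add_of_nonneg_left hp))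

lemma sqrt_add_sqrt_mul_sub_add_sub_mul {p x : A} (hp : 0 ≤ p) (hx : 0 ≤ x) :
    (sqrt (p + x) + sqrt x) * (sqrt (p + x) - sqrt x) +
      (sqrt (p + x) - sqrt x) * (sqrt (p + x) + sqrt x) = 2 • p := by
  calc _ = 2 • (sqrt (p + x) * sqrt (p + x) - sqrt x * sqrt x) := by noncomm_ring
    _ = 2 • p := by
      rw [CFC.sqrt_mul_sqrt_self _ (add_nonneg hp hx), CFC.sqrt_mul_sqrt_self x hx,
        add_sub_cancel_right]

lemma isStrictlyPositive_sqrt_add_sqrt {p x : A} (h : IsStrictlyPositive (p + x)) :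
    IsStrictlyPositive (sqrt (p + x) + sqrt x) :=
  h.sqrt.add_nonneg (CFC.sqrt_nonneg x)

lemma ringInverse_sqrt_add_sqrt_antitone {p x y : A} (hxy : x ≤ y)
    (h : IsStrictlyPositive (p + x)) :
    (sqrt (p + y) + sqrt y)⁻¹ʳ ≤ (sqrt (p + x) + sqrt x)⁻¹ʳ :=
  CStarAlgebra.ringInverse_le_ringInverse
    (add_le_add (CFC.sqrt_le_sqrt _ _ (add_le_add_right hxy p)) (CFC.sqrt_le_sqrt _ _ hxy))
    (isStrictlyPositive_sqrt_add_sqrt h)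

lemma sqrt_algebraMap_add_sub_sqrt {r : ℝ} (hr : 0 < r) {x : A} (hx : 0 ≤ x) :
    sqrt (algebraMap ℝ A r + x) - sqrt x =
      r • (sqrt (algebraMap ℝ A r + x) + sqrt x)⁻¹ʳ := by
  have hrx : IsStrictlyPositive (algebraMap ℝ A r + x) :=
    (isStrictlyPositive_algebraMap hr).add_nonneg hx
  have comm_x : Commute x (sqrt x) := ((Commute.refl x).cfcₙ_nnreal _).symm
  have comm : Commute (sqrt (algebraMap ℝ A r + x)) (sqrt x) :=
    ((Algebra.commute_algebraMap_left r (sqrt x)).add_left comm_x).cfcₙ_nnreal _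
  have mul_eq : (sqrt (algebraMap ℝ A r + x) + sqrt x) *
      (sqrt (algebraMap ℝ A r + x) - sqrt x) = algebraMap ℝ A r := by
    rw [← comm.mul_self_sub_mul_self_eq, CFC.sqrt_mul_sqrt_self _ hrx.nonneg,
      CFC.sqrt_mul_sqrt_self x hx, add_sub_cancel_right]
  rw [← Ring.inverse_mul_cancel_left _ (sqrt (algebraMap ℝ A r + x) - sqrt x)
    (isStrictlyPositive_sqrt_add_sqrt hrx).isUnit, mul_eq, ← Algebra.commutes, Algebra.smul_def]

lemma antitoneOn_sqrt_algebraMap_add_sub_sqrt {r : ℝ} (hr : 0 < r) :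
    AntitoneOn (fun x : A ↦ sqrt (algebraMap ℝ A r + x) - sqrt x) (Set.Ici 0) := by
  intro x (hx : 0 ≤ x) y (hy : 0 ≤ y) hxy
  simp only [sqrt_algebraMap_add_sub_sqrt hr hx, sqrt_algebraMap_add_sub_sqrt hr hy]
  exact smul_le_smul_of_nonneg_left (ringInverse_sqrt_add_sqrt_antitone hxy
    ((isStrictlyPositive_algebraMap hr).add_nonneg hx)) hr.le

lemma sqrt_add_algebraMap_sub_sqrt_le {p x : A} (hp : 0 ≤ p) (hx : 0 ≤ x) {r : ℝ} (hr : 0 < r) :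
    sqrt (p + (algebraMap ℝ A r + x)) - sqrt (algebraMap ℝ A r + x) ≤
      sqrt (p + x) - sqrt x := by
  have h := antitoneOn_sqrt_algebraMap_add_sub_sqrt hr hx (add_nonneg hp hx)
    (le_add_of_nonneg_left hp)
  simp only [add_left_comm _ p] at h
  rw [sub_le_iff_le_add] at h ⊢
  exact h.trans_eq (by abel)

lemma tendsto_sqrt_add_algebraMap_sub_sqrt {p x : A} (hp : 0 ≤ p) (hx : 0 ≤ x) :
    Filter.Tendsto
      (fun r : ℝ ↦ sqrt (p + (algebraMap ℝ A r + x)) - sqrt (algebraMap ℝ A r + x))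
      (𝓝[>] 0) (𝓝 (sqrt (p + x) - sqrt x)) := by
  have sqrt_tendsto {y : A} (hy : 0 ≤ y) :
      Filter.Tendsto (fun r : ℝ ↦ sqrt (algebraMap ℝ A r + y)) (𝓝[>] 0) (𝓝 (sqrt y)) := by
    have shift : ContinuousWithinAt (fun r : ℝ ↦ algebraMap ℝ A r + y) (Set.Ioi 0) 0 := by
      fun_prop
    have maps : Set.MapsTo (fun r : ℝ ↦ algebraMap ℝ A r + y) (Set.Ioi 0) {a | 0 ≤ a} :=
      fun r (hr : 0 < r) ↦ add_nonneg (algebraMap_nonneg A hr.le) hy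
    have sqrt_shift := (CFC.continuousOn_sqrt _ (by simpa using hy)).comp shift maps
    simpa [ContinuousWithinAt, Function.comp_def] using sqrt_shift
  simpa only [add_left_comm p] using (sqrt_tendsto (add_nonneg hp hx)).sub (sqrt_tendsto hx)

lemma exists_norm_one_sub_smul_lt_one {s : A} (hs : IsStrictlyPositive s) :
    ∃ r : ℝ, 0 < r ∧ ‖1 - r • s‖ < 1 := by
  rcases subsingleton_or_nontrivial A with _ | _
  · exact ⟨1, one_pos, by simp [Subsingleton.elim (1 - _ : A) 0]⟩
  have hr : 0 < ‖s‖⁻¹ := inv_pos.2 (norm_pos_iff.2 hs.isUnit.ne_zero)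
  have nonneg : 0 ≤ 1 - ‖s‖⁻¹ • s := by
    rw [sub_nonneg, ← CStarAlgebra.norm_le_one_iff_of_nonneg _ (smul_nonneg hr.le hs.nonneg),
      norm_smul, norm_inv, norm_norm]
    exact inv_mul_le_one
  have mem : 1 - ‖1 - ‖s‖⁻¹ • s‖ ∈ spectrum ℝ (‖s‖⁻¹ • s) := by
    have norm_mem := CStarAlgebra.norm_mem_spectrum_of_nonneg nonneg
    rw [← map_one (algebraMap ℝ A), ← spectrum.singleton_sub_eq, map_one] at norm_mem
    obtain ⟨x, hx, hxeq⟩ : ∃ x ∈ spectrum ℝ (‖s‖⁻¹ • s), 1 - x = ‖1 - ‖s‖⁻¹ • s‖ := by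
      simpa using norm_mem
    rwa [← hxeq, sub_sub_cancel]
  exact ⟨_, hr, sub_pos.1 ((hs.smul hr).spectrum_pos mem)⟩

end CStarAlgebra

section ExtTrace

variable {H : Type*} [NormedAddCommGroup H] [InnerProductSpace ℂ H] [CompleteSpace H]

lemma opDiag_add (S T : H →L[ℂ] H) (i) : opDiag (S + T) i = opDiag S i + opDiag T i := by
  simp [opDiag]

lemma opDiag_smul (r : ℝ) (T : H →L[ℂ] H) (i) : opDiag (r • T) i = r * opDiag T i := by
  simp [opDiag, inner_smul_right_eq_smul]

lemma opDiag_nonneg {T : H →L[ℂ] H} (hT : 0 ≤ T) (i) : 0 ≤ opDiag T i :=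
  ((ContinuousLinearMap.nonneg_iff_isPositive T).1 hT).re_inner_nonneg_right _

lemma opDiag_mono {S T : H →L[ℂ] H} (h : S ≤ T) (i) : opDiag S i ≤ opDiag T i := by
  have := opDiag_nonneg (sub_nonneg.2 h) i
  simpa [opDiag] using this

lemma continuous_opDiag (i) : Continuous fun T : H →L[ℂ] H ↦ opDiag T i := by
  unfold opDiag
  fun_prop

/-- The trace of a positive operator as an element of `[0, ∞]`, which makes additivity,
cyclicity and semicontinuity available without summability hypotheses. Negative diagonal
entries are truncated to `0`, so this is the trace only for positive operators. -/
noncomputable def extTrace (T : H →L[ℂ] H) : ℝ≥0∞ := ∑' i, ENNReal.ofReal (opDiag T i)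

lemma extTrace_mono : Monotone (extTrace (H := H)) := fun _ _ h ↦
  ENNReal.tsum_le_tsum fun i ↦ ENNReal.ofReal_le_ofReal (opDiag_mono h i)

lemma extTrace_add {S T : H →L[ℂ] H} (hS : 0 ≤ S) (hT : 0 ≤ T) :
    extTrace (S + T) = extTrace S + extTrace T := by
  simp only [extTrace, opDiag_add, ENNReal.ofReal_add (opDiag_nonneg hS _) (opDiag_nonneg hT _),
    ENNReal.tsum_add]

lemma extTrace_two_nsmul {T : H →L[ℂ] H} (hT : 0 ≤ T) : extTrace (2 • T) = 2 * extTrace T := by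
  rw [two_nsmul, extTrace_add hT hT, two_mul]

lemma extTrace_smul {r : ℝ} (hr : 0 ≤ r) (T : H →L[ℂ] H) :
    extTrace (r • T) = ENNReal.ofReal r * extTrace T := by
  simp only [extTrace, opDiag_smul, ENNReal.ofReal_mul hr, ENNReal.tsum_mul_left]

lemma extTrace_sum {ι : Type*} (s : Finset ι) {T : ι → H →L[ℂ] H} (hT : ∀ k ∈ s, 0 ≤ T k) :
    extTrace (∑ k ∈ s, T k) = ∑ k ∈ s, extTrace (T k) := by
  classical
  induction s using Finset.induction_on with
  | empty => simp [extTrace, opDiag]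
  | insert k s hk ih =>
    rw [Finset.forall_mem_insert] at hT
    rw [Finset.sum_insert hk, Finset.sum_insert hk,
      extTrace_add hT.1 (Finset.sum_nonneg hT.2), ih hT.2]

lemma lowerSemicontinuous_extTrace : LowerSemicontinuous (extTrace (H := H)) :=
  lowerSemicontinuous_tsum fun i ↦
    (ENNReal.continuous_ofReal.comp (continuous_opDiag i)).lowerSemicontinuous

lemma extTrace_le_of_tendsto {α : Type*} {l : Filter α} [l.NeBot] {F : α → H →L[ℂ] H}
    {T : H →L[ℂ] H} {M : ℝ≥0∞} (hF : Filter.Tendsto F l (𝓝 T))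
    (hM : ∀ᶠ a in l, extTrace (F a) ≤ M) : extTrace T ≤ M :=
  (lowerSemicontinuous_extTrace.isClosed_preimage M).mem_of_tendsto hF hM

lemma IsPosTraceClass.extTrace_eq {T : H →L[ℂ] H} (hT : IsPosTraceClass T) :
    extTrace T = ENNReal.ofReal (opTrace T) :=
  (ENNReal.ofReal_tsum_of_nonneg (opDiag_nonneg hT.1) hT.2).symm

lemma isPosTraceClass_of_extTrace_ne_top {T : H →L[ℂ] H} (hT : 0 ≤ T) (h : extTrace T ≠ ∞) :
    IsPosTraceClass T :=
  ⟨hT, (ENNReal.summable_toReal h).congr fun i ↦ ENNReal.toReal_ofReal (opDiag_nonneg hT i)⟩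

lemma ofReal_opDiag_star_mul_self (M : H →L[ℂ] H) (i) :
    ENNReal.ofReal (opDiag (star M * M) i) =
      ∑' j, ‖⟪traceBasis H j, M (traceBasis H i)⟫_ℂ‖ₑ ^ 2 := by
  have parseval : HasSum (fun j ↦ ‖⟪traceBasis H j, M (traceBasis H i)⟫_ℂ‖ ^ 2)
      (opDiag (star M * M) i) := by
    convert Complex.hasSum_re ((traceBasis H).hasSum_inner_mul_inner (M (traceBasis H i))
      (M (traceBasis H i))) using 1
    · ext j
      rw [← inner_conj_symm (M (traceBasis H i)), mul_comm, Complex.mul_conj, Complex.ofReal_re,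
        Complex.normSq_eq_norm_sq]
    · simp [opDiag, ContinuousLinearMap.star_eq_adjoint, ContinuousLinearMap.adjoint_inner_right]
  rw [← parseval.tsum_eq, ENNReal.ofReal_tsum_of_nonneg (fun _ ↦ sq_nonneg _) parseval.summable]
  simp only [ENNReal.ofReal_pow (norm_nonneg _), ofReal_norm]

lemma extTrace_star_mul_self (M : H →L[ℂ] H) : extTrace (star M * M) = extTrace (M * star M) := by
  have symm (i j) : ‖⟪traceBasis H j, star M (traceBasis H i)⟫_ℂ‖ₑ =
      ‖⟪traceBasis H i, M (traceBasis H j)⟫_ℂ‖ₑ := by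
    rw [ContinuousLinearMap.star_eq_adjoint, ContinuousLinearMap.adjoint_inner_right,
      ← inner_conj_symm, RCLike.enorm_conj]
  have h := ofReal_opDiag_star_mul_self (star M)
  simp only [star_star, symm] at h
  simp only [extTrace, h, ofReal_opDiag_star_mul_self M]
  exact ENNReal.tsum_comm

lemma extTrace_star_mul_mul {T : H →L[ℂ] H} (hT : 0 ≤ T) (M : H →L[ℂ] H) :
    extTrace (star M * T * M) = extTrace (conjSqrt T (M * star M)) := by
  have h := extTrace_star_mul_self (sqrt T * M)
  rw [star_mul, (CFC.sqrt_nonneg T).isSelfAdjoint.star_eq] at h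
  calc extTrace (star M * T * M)
      = extTrace (star M * (sqrt T * sqrt T) * M) := by rw [CFC.sqrt_mul_sqrt_self T hT]
    _ = extTrace (sqrt T * M * (star M * sqrt T)) := by rw [← h]; simp only [mul_assoc]
    _ = extTrace (conjSqrt T (M * star M)) := by simp only [conjSqrt_apply, mul_assoc]

lemma extTrace_mul_mul_self {T x : H →L[ℂ] H} (hT : 0 ≤ T) (hx : IsSelfAdjoint x) :
    extTrace (x * T * x) = extTrace (conjSqrt T (x * x)) := by
  simpa only [hx.star_eq] using extTrace_star_mul_mul hT x

lemma extTrace_star_mul_mul_le {T : H →L[ℂ] H} (hT : 0 ≤ T) (M : H →L[ℂ] H) :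
    extTrace (star M * T * M) ≤ ‖M‖ₑ ^ 2 * extTrace T := by
  have le_smul : conjSqrt T (M * star M) ≤ ‖M‖ ^ 2 • T := by
    simpa [Algebra.algebraMap_eq_smul_one, conjSqrt_one_of_nonneg hT] using
      CFC.conjSqrt_le_conjSqrt (c := T) (CStarAlgebra.mul_star_le_algebraMap_norm_sq (a := M))
  calc extTrace (star M * T * M)
      = extTrace (conjSqrt T (M * star M)) := extTrace_star_mul_mul hT M
    _ ≤ extTrace (‖M‖ ^ 2 • T) := extTrace_mono le_smul
    _ = ‖M‖ₑ ^ 2 * extTrace T := by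
      rw [extTrace_smul (sq_nonneg _), ENNReal.ofReal_pow (norm_nonneg M), ofReal_norm]

lemma extTrace_star_mul_mul_ne_top {T : H →L[ℂ] H} (hT : 0 ≤ T) (h : extTrace T ≠ ∞)
    (M : H →L[ℂ] H) : extTrace (star M * T * M) ≠ ∞ :=
  ne_top_of_le_ne_top (by finiteness) (extTrace_star_mul_mul_le hT M)

end ExtTrace

section Sylvester

variable {H : Type*} [NormedAddCommGroup H] [InnerProductSpace ℂ H] [CompleteSpace H]
  {S D P : H →L[ℂ] H}

lemma extTrace_star_pow_mul_mul_pow_le {Q : H →L[ℂ] H} (hQ : 0 ≤ Q) (V : H →L[ℂ] H) (k : ℕ) :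
    extTrace (star (V ^ k) * Q * V ^ k) ≤ (‖V‖ₑ ^ 2) ^ k * extTrace Q := by
  induction k with
  | zero => simp
  | succ k ih =>
    calc extTrace (star (V ^ (k + 1)) * Q * V ^ (k + 1))
        = extTrace (star V * (star (V ^ k) * Q * V ^ k) * V) := by
          simp only [pow_succ, star_mul, mul_assoc]
      _ ≤ ‖V‖ₑ ^ 2 * extTrace (star (V ^ k) * Q * V ^ k) :=
          extTrace_star_mul_mul_le (star_left_conjugate_nonneg hQ _) V
      _ ≤ ‖V‖ₑ ^ 2 * ((‖V‖ₑ ^ 2) ^ k * extTrace Q) := by gcongr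
      _ = (‖V‖ₑ ^ 2) ^ (k + 1) * extTrace Q := by rw [pow_succ' (‖V‖ₑ ^ 2), mul_assoc]

lemma extTrace_le_of_le_add_star_mul_mul {Q V : H →L[ℂ] H} (hQ : 0 ≤ Q) (hV : ‖V‖ < 1)
    (h : D ≤ Q + star V * D * V) : extTrace D ≤ (1 - ‖V‖ₑ ^ 2)⁻¹ * extTrace Q := by
  have pow_tendsto := tendsto_pow_atTop_nhds_zero_of_norm_lt_one hV
  have conj_tendsto : Filter.Tendsto (fun n ↦ D - star (V ^ n) * D * V ^ n) Filter.atTop (𝓝 D) := by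
    simpa using ((pow_tendsto.star.mul_const D).mul pow_tendsto).const_sub D
  refine extTrace_le_of_tendsto conj_tendsto (.of_forall fun n ↦ ?_)
  calc extTrace (D - star (V ^ n) * D * V ^ n)
      ≤ extTrace (∑ k ∈ Finset.range n, star (V ^ k) * Q * V ^ k) :=
        extTrace_mono (sub_star_pow_mul_mul_pow_le_sum h n)
    _ = ∑ k ∈ Finset.range n, extTrace (star (V ^ k) * Q * V ^ k) :=
        extTrace_sum _ fun k _ ↦ star_left_conjugate_nonneg hQ _
    _ ≤ ∑ k ∈ Finset.range n, (‖V‖ₑ ^ 2) ^ k * extTrace Q :=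
        Finset.sum_le_sum fun k _ ↦ extTrace_star_pow_mul_mul_pow_le hQ V k
    _ ≤ (1 - ‖V‖ₑ ^ 2)⁻¹ * extTrace Q := by
        rw [← Finset.sum_mul, ← ENNReal.tsum_geometric]
        gcongr
        exact ENNReal.sum_le_tsum _

lemma extTrace_sylvester_solution_ne_top (hS : IsStrictlyPositive S) (hD : 0 ≤ D) (hP : 0 ≤ P)
    (h : S * D + D * S = 2 • P) (hPfin : extTrace P ≠ ∞) : extTrace D ≠ ∞ := by
  obtain ⟨r, hr, hV⟩ := exists_norm_one_sub_smul_lt_one hS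
  have hSsa := hS.isSelfAdjoint
  have conj_eq : r • (2 • P) + star (1 - r • S) * D * (1 - r • S) =
      D + (r • S) * D * (r • S) := by
    rw [← h, star_sub, star_one, star_smul, star_trivial, hSsa.star_eq]
    simp only [sub_mul, mul_sub, one_mul, mul_one, smul_mul_assoc, mul_smul_comm, smul_add,
      smul_sub, smul_smul]
    abel
  have le_conj : D ≤ r • (2 • P) + star (1 - r • S) * D * (1 - r • S) := by
    rw [conj_eq]
    exact le_add_of_nonneg_right (((IsSelfAdjoint.all r).smul hSsa).conjugate_nonneg hD)
  refine ne_top_of_le_ne_top ?_ (extTrace_le_of_le_add_star_mul_mul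
    (smul_nonneg hr.le (nsmul_nonneg hP 2)) hV le_conj)
  have norm_sq_lt : ‖1 - r • S‖ₑ ^ 2 < 1 :=
    pow_lt_one₀ zero_le (by rwa [← ofReal_norm, ENNReal.ofReal_lt_one]) two_ne_zero
  rw [extTrace_smul hr.le, extTrace_two_nsmul hP]
  have := (tsub_pos_of_lt norm_sq_lt).ne'
  finiteness

lemma extTrace_sylvester_rhs_ne_top (hS : IsSelfAdjoint S) (hD : 0 ≤ D) (hP : 0 ≤ P)
    (h : S * D + D * S = 2 • P) (hDfin : extTrace D ≠ ∞) : extTrace P ≠ ∞ := by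
  have conj_nonneg : 0 ≤ S * D * S := hS.conjugate_nonneg hD
  have le_conj : P ≤ S * D * S + D :=
    calc P ≤ 2 • P := by rw [two_nsmul]; exact le_add_of_nonneg_right hP
      _ = S * D * S + D - (S - 1) * D * (S - 1) := by rw [← h]; noncomm_ring
      _ ≤ S * D * S + D := sub_le_self _ ((hS.sub (.one _)).conjugate_nonneg hD)
  refine ne_top_of_le_ne_top ?_ (extTrace_mono le_conj)
  rw [extTrace_add conj_nonneg hD]
  refine ENNReal.add_ne_top.2 ⟨?_, hDfin⟩
  simpa only [hS.star_eq] using extTrace_star_mul_mul_ne_top hD hDfin S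

lemma extTrace_mul_mul_add_mul_mul {x y : H →L[ℂ] H} (hx : IsSelfAdjoint x)
    (hy : IsSelfAdjoint y) (hD : 0 ≤ D) (hDfin : extTrace D ≠ ∞) (hxDy : 0 ≤ x * D * y + y * D * x)
    (hxy : 0 ≤ x * y + y * x) :
    extTrace (x * D * y + y * D * x) = extTrace (conjSqrt D (x * y + y * x)) := by
  -- Polarization: compare `(x + y) * D * (x + y)` with `(x - y) * D * (x - y)`.
  have sub_fin : extTrace ((x - y) * D * (x - y)) ≠ ∞ := by
    simpa only [(hx.sub hy).star_eq] using extTrace_star_mul_mul_ne_top hD hDfin (x - y)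
  have conj_eq : (x + y) * D * (x + y) =
      (x - y) * D * (x - y) + 2 • (x * D * y + y * D * x) := by noncomm_ring
  have sq_eq : (x + y) * (x + y) = (x - y) * (x - y) + 2 • (x * y + y * x) := by noncomm_ring
  have conjSqrt_nonneg {T : H →L[ℂ] H} (hT : 0 ≤ T) : 0 ≤ conjSqrt D T := by
    simpa using CFC.conjSqrt_le_conjSqrt (c := D) hT
  have eq_add : extTrace ((x - y) * D * (x - y)) + 2 * extTrace (x * D * y + y * D * x) =
      extTrace ((x - y) * D * (x - y)) + 2 * extTrace (conjSqrt D (x * y + y * x)) :=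
    calc _ = extTrace ((x + y) * D * (x + y)) := by
          rw [conj_eq, extTrace_add ((hx.sub hy).conjugate_nonneg hD) (nsmul_nonneg hxDy 2),
            extTrace_two_nsmul hxDy]
      _ = extTrace (conjSqrt D ((x - y) * (x - y)) + 2 • conjSqrt D (x * y + y * x)) := by
          rw [extTrace_mul_mul_self hD (hx.add hy), sq_eq, map_add, map_nsmul]
      _ = _ := by
          rw [extTrace_add (conjSqrt_nonneg (hx.sub hy).mul_self_nonneg)
            (nsmul_nonneg (conjSqrt_nonneg hxy) 2), extTrace_two_nsmul (conjSqrt_nonneg hxy),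
            extTrace_mul_mul_self hD (hx.sub hy)]
  exact (ENNReal.mul_right_inj two_ne_zero ENNReal.ofNat_ne_top).1
    ((ENNReal.add_right_inj sub_fin).1 eq_add)

lemma extTrace_sylvester_solution_eq (hS : IsStrictlyPositive S) (hD : 0 ≤ D) (hP : 0 ≤ P)
    (h : S * D + D * S = 2 • P) (hDfin : extTrace D ≠ ∞) :
    extTrace D = extTrace (conjSqrt P S⁻¹ʳ) := by
  have hx : IsSelfAdjoint (sqrt S) := (CFC.sqrt_nonneg S).isSelfAdjoint
  have hy : IsSelfAdjoint (sqrt S⁻¹ʳ) := (CFC.sqrt_nonneg _).isSelfAdjoint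
  have mul_inv : sqrt S * sqrt S⁻¹ʳ = 1 := by
    rw [CFC.sqrt_ringInverse, Ring.mul_inverse_cancel _ hS.isUnit_cfcSqrt]
  have inv_mul : sqrt S⁻¹ʳ * sqrt S = 1 := by
    rw [CFC.sqrt_ringInverse, Ring.inverse_mul_cancel _ hS.isUnit_cfcSqrt]
  have conj_eq : sqrt S * D * sqrt S⁻¹ʳ + sqrt S⁻¹ʳ * D * sqrt S =
      2 • (sqrt S⁻¹ʳ * P * sqrt S⁻¹ʳ) :=
    calc _ = (sqrt S⁻¹ʳ * sqrt S) * sqrt S * D * sqrt S⁻¹ʳ +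
          sqrt S⁻¹ʳ * D * sqrt S * (sqrt S * sqrt S⁻¹ʳ) := by
          rw [inv_mul, mul_inv, one_mul, mul_one]
      _ = sqrt S⁻¹ʳ * (sqrt S * sqrt S * D + D * (sqrt S * sqrt S)) * sqrt S⁻¹ʳ := by noncomm_ring
      _ = _ := by rw [CFC.sqrt_mul_sqrt_self S hS.nonneg, h]; noncomm_ring
  have conj_nonneg : 0 ≤ sqrt S⁻¹ʳ * P * sqrt S⁻¹ʳ := hy.conjugate_nonneg hP
  have sum_eq : sqrt S * sqrt S⁻¹ʳ + sqrt S⁻¹ʳ * sqrt S = 2 • 1 := by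
    rw [mul_inv, inv_mul, two_nsmul]
  have two_mul_eq : 2 * extTrace (sqrt S⁻¹ʳ * P * sqrt S⁻¹ʳ) = 2 * extTrace D := by
    have polarized := extTrace_mul_mul_add_mul_mul hx hy hD hDfin
      (conj_eq ▸ nsmul_nonneg conj_nonneg 2) (sum_eq ▸ nsmul_nonneg zero_le_one 2)
    rwa [conj_eq, sum_eq, map_nsmul, conjSqrt_one_of_nonneg hD, extTrace_two_nsmul conj_nonneg,
      extTrace_two_nsmul hD] at polarized
  rw [← (ENNReal.mul_right_inj two_ne_zero ENNReal.ofNat_ne_top).1 two_mul_eq,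
    extTrace_mul_mul_self hP hy, CFC.sqrt_mul_sqrt_self _ hS.ringInverse.nonneg]

end Sylvester

section SqrtDifference

variable {H : Type*} [NormedAddCommGroup H] [InnerProductSpace ℂ H] [CompleteSpace H]
  {P X Y : H →L[ℂ] H}

lemma extTrace_sqrt_add_sub_sqrt_le_of_isStrictlyPositive (hP : 0 ≤ P)
    (hX : IsStrictlyPositive X) (hXY : X ≤ Y) :
    extTrace (sqrt (P + Y) - sqrt Y) ≤ extTrace (sqrt (P + X) - sqrt X) := by
  by_cases hXfin : extTrace (sqrt (P + X) - sqrt X) = ∞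
  · exact hXfin ▸ le_top
  have hY : IsStrictlyPositive Y := hX.of_le hXY
  have hSX := isStrictlyPositive_sqrt_add_sqrt (hX.nonneg_add hP)
  have hSY := isStrictlyPositive_sqrt_add_sqrt (hY.nonneg_add hP)
  have hDX : 0 ≤ sqrt (P + X) - sqrt X := sqrt_add_sub_sqrt_nonneg hP
  have hDY : 0 ≤ sqrt (P + Y) - sqrt Y := sqrt_add_sub_sqrt_nonneg hP
  have eqX := sqrt_add_sqrt_mul_sub_add_sub_mul hP hX.nonneg
  have eqY := sqrt_add_sqrt_mul_sub_add_sub_mul hP hY.nonneg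
  have hPfin := extTrace_sylvester_rhs_ne_top hSX.isSelfAdjoint hDX hP eqX hXfin
  have hYfin := extTrace_sylvester_solution_ne_top hSY hDY hP eqY hPfin
  rw [extTrace_sylvester_solution_eq hSX hDX hP eqX hXfin,
    extTrace_sylvester_solution_eq hSY hDY hP eqY hYfin]
  exact extTrace_mono (CFC.conjSqrt_le_conjSqrt
    (ringInverse_sqrt_add_sqrt_antitone hXY (hX.nonneg_add hP)))

lemma antitoneOn_extTrace_sqrt_add_sub_sqrt (hP : 0 ≤ P) :
    AntitoneOn (fun X ↦ extTrace (sqrt (P + X) - sqrt X)) (Set.Ici 0) := by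
  intro X (hX : 0 ≤ X) Y (hY : 0 ≤ Y) hXY
  refine extTrace_le_of_tendsto (tendsto_sqrt_add_algebraMap_sub_sqrt hP hY)
    (eventually_mem_nhdsWithin.mono fun r (hr : 0 < r) ↦ ?_)
  have hrX := (isStrictlyPositive_algebraMap (A := H →L[ℂ] H) hr).add_nonneg hX
  exact (extTrace_sqrt_add_sub_sqrt_le_of_isStrictlyPositive hP hrX
    (add_le_add_right hXY _)).trans (extTrace_mono (sqrt_add_algebraMap_sub_sqrt_le hP hX hr))

theorem trace_sqrt_sub_antitone_general {A B C : H →L[ℂ] H} (hA : IsSelfAdjoint A) (hB : 0 ≤ B)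
    (hC : 0 ≤ C) (hBC : B ^ 2 ≤ C ^ 2) (h : IsPosTraceClass (sqrt (A ^ 2 + B ^ 2) - B)) :
    IsPosTraceClass (sqrt (A ^ 2 + C ^ 2) - C) ∧
      opTrace (sqrt (A ^ 2 + C ^ 2) - C) ≤ opTrace (sqrt (A ^ 2 + B ^ 2) - B) := by
  have le := antitoneOn_extTrace_sqrt_add_sub_sqrt hA.sq_nonneg (CStarAlgebra.pow_nonneg hB 2)
    (CStarAlgebra.pow_nonneg hC 2) hBC
  simp only [CFC.sqrt_sq B hB, CFC.sqrt_sq C hC, h.extTrace_eq] at le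
  have nonneg : 0 ≤ sqrt (A ^ 2 + C ^ 2) - C := by
    have sqrt_sub_nonneg := sqrt_add_sub_sqrt_nonneg (x := C ^ 2) hA.sq_nonneg
    rwa [CFC.sqrt_sq C hC] at sqrt_sub_nonneg
  have hCtr := isPosTraceClass_of_extTrace_ne_top nonneg
    (ne_top_of_le_ne_top ENNReal.ofReal_ne_top le)
  rw [hCtr.extTrace_eq] at le
  exact ⟨hCtr, (ENNReal.ofReal_le_ofReal_iff (tsum_nonneg (opDiag_nonneg h.1))).1 le⟩

end SqrtDifference

/-- For `A` positive trace class and `B, C` positive bounded with `B² ≤ C²`,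
`Tr[(A² + C²)^{1/2} − C] ≤ Tr[(A² + B²)^{1/2} − B]`, both operators being positive trace
class. -/
theorem trace_sqrt_sub_antitone {H : Type*} [NormedAddCommGroup H] [InnerProductSpace ℂ H]
    [CompleteSpace H] (A B C : H →L[ℂ] H) (hA : IsPosTraceClass A) (hB : 0 ≤ B) (hC : 0 ≤ C)
    (hBC : B ^ 2 ≤ C ^ 2) :
    IsPosTraceClass (CFC.sqrt (A ^ 2 + B ^ 2) - B) ∧
    IsPosTraceClass (CFC.sqrt (A ^ 2 + C ^ 2) - C) ∧
    opTrace (CFC.sqrt (A ^ 2 + C ^ 2) - C) ≤ opTrace (CFC.sqrt (A ^ 2 + B ^ 2) - B) := by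
  have hBtr := (trace_sqrt_sub_antitone_general hA.1.isSelfAdjoint le_rfl hB
    (by simpa using CStarAlgebra.pow_nonneg hB 2) (by simpa [CFC.sqrt_sq A hA.1] using hA)).1
  exact ⟨hBtr, trace_sqrt_sub_antitone_general hA.1.isSelfAdjoint hB hC hBC hBtr⟩
end

section
/- Let A and B be positive bounded operators on a complex Hilbert space H and let ε > 0. Then (A^2 + B^2 + ε·1)^{1/2} − (B^2 + ε·1)^{1/2} ≤ (A^2 + B^2)^{1/2} − B in the Loewner order. -/
set_option synthInstance.maxHeartbeats 1000000
set_option maxHeartbeats 1000000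

open scoped InnerProductSpace

/-!
For commuting positive elements, `√a - √b = (√a + √b)⁻¹ (a - b)`. Hence
`√(a + ε) - √a = ε (√(a + ε) + √a)⁻¹`, which decreases as `a` grows because the square root is
operator monotone and inversion is operator antitone. Comparing the values at `B² ≤ A² + B²` and
exchanging two terms gives the claim.
-/

section SqrtDifference

open scoped Ring

theorem commute_sqrt_sqrt {𝓐 : Type*} [NonUnitalCStarAlgebra 𝓐] [PartialOrder 𝓐]
    [StarOrderedRing 𝓐] {a b : 𝓐} (hab : Commute a b) :
    Commute (CFC.sqrt a) (CFC.sqrt b) :=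
  ((hab.cfcₙ_nnreal _).symm.cfcₙ_nnreal _).symm

theorem sqrt_add_sqrt_mul_sqrt_sub_sqrt {𝓐 : Type*} [NonUnitalCStarAlgebra 𝓐] [PartialOrder 𝓐]
    [StarOrderedRing 𝓐] {a b : 𝓐} (ha : 0 ≤ a) (hb : 0 ≤ b) (hab : Commute a b) :
    (CFC.sqrt a + CFC.sqrt b) * (CFC.sqrt a - CFC.sqrt b) = a - b := by
  rw [← (commute_sqrt_sqrt hab).mul_self_sub_mul_self_eq, CFC.sqrt_mul_sqrt_self a,
    CFC.sqrt_mul_sqrt_self b]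

variable {𝓐 : Type*} [CStarAlgebra 𝓐] [PartialOrder 𝓐] [StarOrderedRing 𝓐]

theorem isStrictlyPositive_sqrt_add_sqrt_s2 {a : 𝓐} (ha : IsStrictlyPositive a) (b : 𝓐) :
    IsStrictlyPositive (CFC.sqrt a + CFC.sqrt b) :=
  ha.sqrt.add_nonneg (CFC.sqrt_nonneg b)

theorem sqrt_sub_sqrt_eq_inverse_mul {a b : 𝓐} (ha : IsStrictlyPositive a) (hb : 0 ≤ b)
    (hab : Commute a b) :
    CFC.sqrt a - CFC.sqrt b = (CFC.sqrt a + CFC.sqrt b)⁻¹ʳ * (a - b) := by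
  rw [← sqrt_add_sqrt_mul_sqrt_sub_sqrt ha.nonneg hb hab,
    Ring.inverse_mul_cancel_left _ _ (isStrictlyPositive_sqrt_add_sqrt_s2 ha b).isUnit]

theorem isStrictlyPositive_add_smul_one {a : 𝓐} (ha : 0 ≤ a) {ε : ℝ} (hε : 0 < ε) :
    IsStrictlyPositive (a + ε • (1 : 𝓐)) :=
  (isStrictlyPositive_one.smul hε).nonneg_add ha

theorem sqrt_add_smul_one_sub_sqrt_eq_smul_inverse {a : 𝓐} (ha : 0 ≤ a) {ε : ℝ} (hε : 0 < ε) :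
    CFC.sqrt (a + ε • (1 : 𝓐)) - CFC.sqrt a =
      ε • (CFC.sqrt (a + ε • (1 : 𝓐)) + CFC.sqrt a)⁻¹ʳ := by
  have hcomm : Commute (a + ε • (1 : 𝓐)) a :=
    (Commute.refl a).add_left ((Commute.one_left a).smul_left ε)
  rw [sqrt_sub_sqrt_eq_inverse_mul (isStrictlyPositive_add_smul_one ha hε) ha hcomm,
    add_sub_cancel_left, mul_smul_comm, mul_one]

theorem antitoneOn_sqrt_add_smul_one_sub_sqrt {ε : ℝ} (hε : 0 ≤ ε) :
    AntitoneOn (fun a : 𝓐 ↦ CFC.sqrt (a + ε • (1 : 𝓐)) - CFC.sqrt a) (Set.Ici 0) := by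
  intro a (ha : 0 ≤ a) b (hb : 0 ≤ b) hab
  obtain rfl | hε := hε.eq_or_lt
  · simp
  have hsum : CFC.sqrt (a + ε • (1 : 𝓐)) + CFC.sqrt a ≤
      CFC.sqrt (b + ε • (1 : 𝓐)) + CFC.sqrt b := by gcongr
  have hpos := isStrictlyPositive_sqrt_add_sqrt_s2 (isStrictlyPositive_add_smul_one ha hε) a
  calc
    CFC.sqrt (b + ε • (1 : 𝓐)) - CFC.sqrt b
      = ε • (CFC.sqrt (b + ε • (1 : 𝓐)) + CFC.sqrt b)⁻¹ʳ :=
        sqrt_add_smul_one_sub_sqrt_eq_smul_inverse hb hε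
    _ ≤ ε • (CFC.sqrt (a + ε • (1 : 𝓐)) + CFC.sqrt a)⁻¹ʳ :=
        smul_le_smul_of_nonneg_left (CStarAlgebra.ringInverse_le_ringInverse hsum hpos) hε.le
    _ = CFC.sqrt (a + ε • (1 : 𝓐)) - CFC.sqrt a :=
        (sqrt_add_smul_one_sub_sqrt_eq_smul_inverse ha hε).symm

theorem sqrt_perturbation_le_general {a b : 𝓐} (ha : 0 ≤ a) (hb : 0 ≤ b) {ε : ℝ} (hε : 0 ≤ ε) :
    CFC.sqrt (a + b ^ 2 + ε • (1 : 𝓐)) - CFC.sqrt (b ^ 2 + ε • (1 : 𝓐)) ≤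
      CFC.sqrt (a + b ^ 2) - b := by
  have hb_sq : 0 ≤ b ^ 2 := (IsSelfAdjoint.of_nonneg hb).sq_nonneg
  have hdiff : CFC.sqrt (a + b ^ 2 + ε • (1 : 𝓐)) - CFC.sqrt (a + b ^ 2) ≤
      CFC.sqrt (b ^ 2 + ε • (1 : 𝓐)) - CFC.sqrt (b ^ 2) :=
    antitoneOn_sqrt_add_smul_one_sub_sqrt hε hb_sq (add_nonneg ha hb_sq)
      (le_add_of_nonneg_left ha)
  rw [CFC.sqrt_sq b] at hdiff
  rwa [sub_le_sub_iff, add_comm (CFC.sqrt (a + b ^ 2)), ← sub_le_sub_iff]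

end SqrtDifference

/-- For `A, B` positive bounded and `ε > 0`,
`(A² + B² + ε)^{1/2} − (B² + ε)^{1/2} ≤ (A² + B²)^{1/2} − B` in the Loewner order. -/
theorem sqrt_perturbation_le {H : Type*} [NormedAddCommGroup H] [InnerProductSpace ℂ H]
    [CompleteSpace H] (A B : H →L[ℂ] H) (hA : 0 ≤ A) (hB : 0 ≤ B) (ε : ℝ) (hε : 0 < ε) :
    CFC.sqrt (A ^ 2 + B ^ 2 + ε • (1 : H →L[ℂ] H)) - CFC.sqrt (B ^ 2 + ε • (1 : H →L[ℂ] H))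
      ≤ CFC.sqrt (A ^ 2 + B ^ 2) - B :=
  sqrt_perturbation_le_general (IsSelfAdjoint.of_nonneg hA).sq_nonneg hB hε.le
end

section
/- Let A and B be positive bounded invertible operators (with bounded inverses) on a complex Hilbert space H with A ≠ B, and let λ ∈ (0,1). Then the operator λ A^{-1} + (1−λ) B^{-1} − (λ A + (1−λ) B)^{-1} is positive and is not equal to 0. -/
set_option synthInstance.maxHeartbeats 1000000
set_option maxHeartbeats 1000000

open scoped InnerProductSpace

/-!
Put `p = a⁻¹`, `q = b⁻¹` and `m = t p + s q`, where `s + t = 1`. Since `m = p (s a + t b) q`, the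
inverse of `s a + t b` is `q m⁻¹ p`, and substituting `q = m - t (p - q)` and `p = m + s (p - q)`
turns this into `s p + t q - s t (p - q) m⁻¹ (p - q)`. The convexity gap of the inverse is thus
`s t` times the conjugate of a strictly positive element by the nonzero self-adjoint `p - q`.
-/

open scoped Ring

section Algebra

variable {R A : Type*}

lemma ringInverse_smul_add_smul [CommSemiring R] [Semiring A] [Algebra R A] {a b : A}
    (ha : IsUnit a) (hb : IsUnit b) (s t : R) :
    (s • a + t • b)⁻¹ʳ = b⁻¹ʳ * (t • a⁻¹ʳ + s • b⁻¹ʳ)⁻¹ʳ * a⁻¹ʳ := by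
  have factorization : s • a + t • b = a * (t • a⁻¹ʳ + s • b⁻¹ʳ) * b := by
    simp only [mul_add, add_mul, mul_smul_comm, smul_mul_assoc, Ring.mul_inverse_cancel a ha,
      Ring.inverse_mul_cancel_right b a hb, one_mul]
    exact add_comm _ _
  rw [factorization, Ring.inverse_mul (.inr hb), Ring.inverse_mul (.inl ha), mul_assoc]

lemma mul_ringInverse_mul_eq_sub_conjugate [CommRing R] [Ring A] [Algebra R A] (p q : A) {s t : R}
    (hst : s + t = 1) (hm : IsUnit (t • p + s • q)) :
    q * (t • p + s • q)⁻¹ʳ * p =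
      s • p + t • q - (s * t) • ((p - q) * (t • p + s • q)⁻¹ʳ * (p - q)) := by
  obtain rfl : t = 1 - s := eq_sub_of_add_eq' hst
  set m := (1 - s) • p + s • q with m_def
  have hp : p = m + s • (p - q) := by rw [m_def]; module
  have hq : q = m - (1 - s) • (p - q) := by rw [m_def]; module
  calc q * m⁻¹ʳ * p
      = (m - (1 - s) • (p - q)) * m⁻¹ʳ * (m + s • (p - q)) := by rw [← hp, ← hq]
    _ = m + s • (p - q) - (1 - s) • (p - q) -
          (s * (1 - s)) • ((p - q) * m⁻¹ʳ * (p - q)) := by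
        generalize p - q = d
        simp only [sub_mul, mul_add, smul_mul_assoc, mul_smul_comm, Ring.mul_inverse_cancel m hm,
          Ring.inverse_mul_cancel_right m d hm, one_mul]
        module
    _ = s • p + (1 - s) • q - (s * (1 - s)) • ((p - q) * m⁻¹ʳ * (p - q)) := by
        generalize (p - q) * m⁻¹ʳ * (p - q) = c
        rw [m_def]
        module

lemma smul_ringInverse_add_smul_ringInverse_sub_ringInverse [CommRing R] [Ring A] [Algebra R A]
    {a b : A} (ha : IsUnit a) (hb : IsUnit b) {s t : R} (hst : s + t = 1)
    (hm : IsUnit (t • a⁻¹ʳ + s • b⁻¹ʳ)) :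
    s • a⁻¹ʳ + t • b⁻¹ʳ - (s • a + t • b)⁻¹ʳ =
      (s * t) • ((a⁻¹ʳ - b⁻¹ʳ) * (t • a⁻¹ʳ + s • b⁻¹ʳ)⁻¹ʳ * (a⁻¹ʳ - b⁻¹ʳ)) := by
  rw [ringInverse_smul_add_smul ha hb, mul_ringInverse_mul_eq_sub_conjugate _ _ hst hm,
    sub_sub_cancel]

lemma ringInverse_injOn_isUnit [MonoidWithZero A] :
    Set.InjOn Ring.inverse {a : A | IsUnit a} := fun a ha b hb h ↦ by
  rw [← Ring.inverse_inverse ha, h, Ring.inverse_inverse hb]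

end Algebra

section CStarRing

variable {A : Type*}

lemma star_left_conjugate_eq_zero_iff [NonUnitalNormedRing A] [StarRing A] [CStarRing A]
    [PartialOrder A] [StarOrderedRing A] {a : A} (ha : 0 ≤ a) (x : A) :
    star x * a * x = 0 ↔ a * x = 0 := by
  refine ⟨fun h ↦ ?_, fun h ↦ by rw [mul_assoc, h, mul_zero]⟩
  rw [StarOrderedRing.nonneg_iff] at ha
  induction ha using AddSubmonoid.closure_induction with
  | mem _ hs =>
    obtain ⟨s, rfl⟩ := hs
    have hsx : s * x = 0 := by
      rw [← CStarRing.star_mul_self_eq_zero_iff, star_mul, ← h]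
      simp only [mul_assoc]
    rw [mul_assoc, hsx, mul_zero]
  | zero => exact zero_mul x
  | add b c hb hc ihb ihc =>
    rw [← StarOrderedRing.nonneg_iff] at hb hc
    rw [mul_add, add_mul, add_eq_zero_iff_of_nonneg (star_left_conjugate_nonneg hb x)
      (star_left_conjugate_nonneg hc x)] at h
    rw [add_mul, ihb h.1, ihc h.2, add_zero]

lemma star_left_conjugate_pos_of_isStrictlyPositive [NormedRing A] [StarRing A] [CStarRing A]
    [PartialOrder A] [StarOrderedRing A] {a x : A} (ha : IsStrictlyPositive a) (hx : x ≠ 0) :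
    0 < star x * a * x := by
  refine (star_left_conjugate_nonneg ha.nonneg x).lt_of_ne' fun h ↦ hx ?_
  rwa [star_left_conjugate_eq_zero_iff ha.nonneg, ha.isUnit.mul_right_eq_zero] at h

end CStarRing

theorem inverse_strictly_convex_general {A : Type*} [CStarAlgebra A] [PartialOrder A]
    [StarOrderedRing A] : StrictConvexOn ℝ {a : A | IsStrictlyPositive a} Ring.inverse := by
  have convex_pos : Convex ℝ {a : A | IsStrictlyPositive a} :=
    CStarAlgebra.convexOn_ringInverse.1
  refine ⟨convex_pos, fun a ha b hb hab s t hs ht hst ↦ ?_⟩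
  have mean_pos : IsStrictlyPositive (t • a⁻¹ʳ + s • b⁻¹ʳ) :=
    convex_pos ha.ringInverse hb.ringInverse ht.le hs.le (add_comm s t ▸ hst)
  have diff_selfAdjoint : IsSelfAdjoint (a⁻¹ʳ - b⁻¹ʳ) :=
    ha.isSelfAdjoint.ringInverse.sub hb.isSelfAdjoint.ringInverse
  have diff_ne_zero : a⁻¹ʳ - b⁻¹ʳ ≠ 0 :=
    sub_ne_zero.mpr (ringInverse_injOn_isUnit.ne ha.isUnit hb.isUnit hab)
  have conjugate_pos : 0 < (a⁻¹ʳ - b⁻¹ʳ) * (t • a⁻¹ʳ + s • b⁻¹ʳ)⁻¹ʳ * (a⁻¹ʳ - b⁻¹ʳ) := by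
    simpa only [diff_selfAdjoint.star_eq] using
      star_left_conjugate_pos_of_isStrictlyPositive mean_pos.ringInverse diff_ne_zero
  rw [← sub_pos, smul_ringInverse_add_smul_ringInverse_sub_ringInverse ha.isUnit hb.isUnit hst
    mean_pos.isUnit]
  exact smul_pos (mul_pos hs ht) conjugate_pos

/-- For `A ≠ B` positive bounded invertible operators and `λ ∈ (0,1)`, the
operator `λ A⁻¹ + (1−λ) B⁻¹ − (λ A + (1−λ) B)⁻¹` is positive and nonzero. -/
theorem inverse_strictly_convex {H : Type*} [NormedAddCommGroup H] [InnerProductSpace ℂ H]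
    [CompleteSpace H] (A B : H →L[ℂ] H) (hA : 0 ≤ A) (hB : 0 ≤ B) (hAu : IsUnit A)
    (hBu : IsUnit B) (hne : A ≠ B) (l : ℝ) (hl : l ∈ Set.Ioo (0 : ℝ) 1) :
    0 ≤ l • Ring.inverse A + (1 - l) • Ring.inverse B - Ring.inverse (l • A + (1 - l) • B) ∧
    l • Ring.inverse A + (1 - l) • Ring.inverse B - Ring.inverse (l • A + (1 - l) • B) ≠ 0 := by
  rw [← lt_iff_le_and_ne', sub_pos]
  exact inverse_strictly_convex_general.2 (hAu.isStrictlyPositive hA) (hBu.isStrictlyPositive hB)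
    hne hl.1 (sub_pos.mpr hl.2) (add_sub_cancel l 1)
end

section
/- Let U be a nonempty subset of a real or complex Hilbert space H that is closed in the weak topology, and let f : U → ℝ be lower semicontinuous with respect to the weak topology and coercive, in the sense that f(u) tends to +∞ as ‖u‖ → ∞ along U (for every M ∈ ℝ there is R such that f(u) ≥ M whenever u ∈ U and ‖u‖ ≥ R). Then there exists u₀ ∈ U with f(u₀) = inf_{u ∈ U} f(u). -/
set_option synthInstance.maxHeartbeats 1000000
set_option maxHeartbeats 1000000

open scoped InnerProductSpace

/-!
Reflexivity makes the norm-closed balls weakly compact: the weak topology is the one induced from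
the weak-* topology of the bidual, where the Banach–Alaoglu theorem applies. Coercivity confines the
points where `f < f v`, for a fixed `v ∈ U`, to such a ball, and a lower semicontinuous function
attains its minimum on the weakly compact set cut out of `U` by that ball. A Hilbert space is
reflexive by the Fréchet–Riesz theorem: pulling `Φ ∈ H**` back along the conjugate-linear `H ≃ H*`
and conjugating gives a functional on `H`, and the vector representing it is mapped to `Φ`.
-/

open Filter Metric NormedSpace Set

theorem exists_isMinOn_of_lowerSemicontinuousOn_of_eventually_cocompact {X α : Type*}
    [TopologicalSpace X] [LinearOrder α] {f : X → α} {s : Set X}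
    (hf : LowerSemicontinuousOn f s) (hs : IsClosed s) {x₀ : X} (hx₀ : x₀ ∈ s)
    (hc : ∀ᶠ x in cocompact X ⊓ 𝓟 s, f x₀ ≤ f x) :
    ∃ x ∈ s, IsMinOn f s x := by
  obtain ⟨K, hK, le_off_K⟩ := (hasBasis_cocompact.inf_principal s).eventually_iff.1 hc
  have hsub : insert x₀ (K ∩ s) ⊆ s := insert_subset hx₀ inter_subset_right
  obtain ⟨x, hx, hmin⟩ := (hf.mono hsub).exists_isMinOn (insert_nonempty x₀ _)
    ((hK.inter_right hs).insert x₀)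
  refine ⟨x, hsub hx, fun y hy ↦ ?_⟩
  by_cases hyK : y ∈ K
  · exact hmin (mem_insert_of_mem x₀ ⟨hyK, hy⟩)
  · exact (hmin (mem_insert x₀ _)).trans (le_off_K ⟨hyK, hy⟩)

theorem surjective_inclusionInDoubleDual_of_innerProductSpace (𝕜 H : Type*) [RCLike 𝕜]
    [NormedAddCommGroup H] [InnerProductSpace 𝕜 H] [CompleteSpace H] :
    Function.Surjective (inclusionInDoubleDual 𝕜 H) := by
  intro Φ
  let conjΦ : StrongDual 𝕜 H := (starL 𝕜 : 𝕜 ≃L⋆[𝕜] 𝕜).toContinuousLinearMap.comp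
    (Φ.comp (InnerProductSpace.toDual 𝕜 H).toContinuousLinearEquiv.toContinuousLinearMap)
  refine ⟨(InnerProductSpace.toDual 𝕜 H).symm conjΦ, ?_⟩
  ext φ
  obtain ⟨y, rfl⟩ := (InnerProductSpace.toDual 𝕜 H).surjective φ
  calc ⟪y, (InnerProductSpace.toDual 𝕜 H).symm conjΦ⟫_𝕜
      = star ⟪(InnerProductSpace.toDual 𝕜 H).symm conjΦ, y⟫_𝕜 := (inner_conj_symm _ _).symm
    _ = star (conjΦ y) := by rw [InnerProductSpace.toDual_symm_apply]
    _ = Φ (InnerProductSpace.toDual 𝕜 H y) := star_star _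

section Reflexive

variable {𝕜 E : Type*} [RCLike 𝕜] [NormedAddCommGroup E] [NormedSpace 𝕜 E]

theorem isClosed_toWeakSpace_image_closedBall (x : E) (r : ℝ) :
    IsClosed (toWeakSpace 𝕜 E '' closedBall x r) := by
  let : NormedSpace ℝ E := NormedSpace.restrictScalars ℝ 𝕜 E
  rw [← closure_eq_iff_isClosed, ← (convex_closedBall x r).toWeakSpace_closure 𝕜,
    isClosed_closedBall.closure_eq]

theorem isCompact_toWeakSpace_image_closedBall
    (hE : Function.Surjective (inclusionInDoubleDual 𝕜 E)) (x : E) (r : ℝ) :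
    IsCompact (toWeakSpace 𝕜 E '' closedBall x r) := by
  rw [← (isClosed_toWeakSpace_image_closedBall x r).closure_eq]
  refine isCompact_closure_of_isBounded 𝕜 E _ ?_ ?_
  · rw [preimage_image_eq _ (toWeakSpace 𝕜 E).injective]
    exact isBounded_closedBall
  · have weak_surjective : Function.Surjective (inclusionInDoubleDualWeak 𝕜 E) := hE
    exact weak_surjective.range_eq ▸ subset_univ _

theorem exists_minimizer_of_weakly_lsc_coercive_general {α : Type*}
    [ConditionallyCompleteLinearOrder α]
    (hE : Function.Surjective (inclusionInDoubleDual 𝕜 E)) {U : Set E}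
    (hclosed : IsClosed (toWeakSpace 𝕜 E '' U)) {f : E → α}
    (hlsc : LowerSemicontinuousOn (f ∘ (toWeakSpace 𝕜 E).symm) (toWeakSpace 𝕜 E '' U))
    {v : E} (hv : v ∈ U) (hcoercive : ∃ R : ℝ, ∀ u ∈ U, R ≤ ‖u‖ → f v ≤ f u) :
    ∃ u₀ ∈ U, f u₀ = sInf (f '' U) := by
  obtain ⟨R, hR⟩ := hcoercive
  have le_off_ball : ∀ᶠ x in cocompact (WeakSpace 𝕜 E) ⊓ 𝓟 (toWeakSpace 𝕜 E '' U),
      f v ≤ f ((toWeakSpace 𝕜 E).symm x) := by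
    rw [eventually_inf_principal]
    filter_upwards [(isCompact_toWeakSpace_image_closedBall hE 0 R).compl_mem_cocompact]
    rintro _ hball ⟨u, hu, rfl⟩
    have norm_gt : R < ‖u‖ := by simpa using hball
    simpa using hR u hu norm_gt.le
  obtain ⟨_, ⟨u₀, hu₀, rfl⟩, hmin⟩ :=
    exists_isMinOn_of_lowerSemicontinuousOn_of_eventually_cocompact hlsc hclosed
      (mem_image_of_mem _ hv) (by simpa using le_off_ball)
  have hmin_f : IsMinOn f U u₀ := fun u hu ↦ by simpa using hmin (mem_image_of_mem _ hu)
  exact ⟨u₀, hu₀, by rw [sInf_image', hmin_f.iInf_eq hu₀]⟩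

end Reflexive

/-- A weakly lower semicontinuous coercive function on a nonempty weakly closed
subset of a Hilbert space attains its infimum. -/
theorem exists_minimizer_of_weakly_lsc_coercive {𝕜 H : Type*} [RCLike 𝕜]
    [NormedAddCommGroup H] [InnerProductSpace 𝕜 H] [CompleteSpace H]
    (U : Set H) (hne : U.Nonempty)
    (hclosed : IsClosed ((toWeakSpace 𝕜 H) '' U))
    (f : H → ℝ)
    (hlsc : LowerSemicontinuousOn (f ∘ (toWeakSpace 𝕜 H).symm) ((toWeakSpace 𝕜 H) '' U))
    (hcoercive : ∀ M : ℝ, ∃ R : ℝ, ∀ u ∈ U, R ≤ ‖u‖ → M ≤ f u) :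
    ∃ u₀ ∈ U, f u₀ = sInf (f '' U) := by
  obtain ⟨v, hv⟩ := hne
  exact exists_minimizer_of_weakly_lsc_coercive_general
    (surjective_inclusionInDoubleDual_of_innerProductSpace 𝕜 H) hclosed hlsc hv (hcoercive (f v))
end

section
/- Let y₁ and y₂ be self-adjoint bounded operators on a complex Hilbert space H with y₁ ≥ δ·1 and y₂ ≥ δ·1 for some δ > 0, and let κ₁, κ₂ ∈ H. Then ⟨κ₁ + κ₂, (y₁ + y₂)^{-1}(κ₁ + κ₂)⟩ ≤ ⟨κ₁, y₁^{-1} κ₁⟩ + ⟨κ₂, y₂^{-1} κ₂⟩. -/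
set_option synthInstance.maxHeartbeats 1000000
set_option maxHeartbeats 1000000

open scoped InnerProductSpace

/-! For `T` positive and invertible, `⟪κ, T⁻¹ κ⟫` is the maximum over `w` of
`2 re ⟪κ, w⟫ - re ⟪w, T w⟫`, attained at `w = T⁻¹ κ`. This expression is additive in the pair
`(T, κ)`, so its maximum is subadditive. -/

section PositiveOperators

open RCLike

variable {𝕜 E : Type*} [RCLike 𝕜] [NormedAddCommGroup E] [InnerProductSpace 𝕜 E]

theorem two_mul_re_inner_sub_re_inner_apply_le {T : E →ₗ[𝕜] E} (hT : T.IsPositive) {x κ : E}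
    (hx : T x = κ) (w : E) : 2 * re ⟪κ, w⟫_𝕜 - re ⟪w, T w⟫_𝕜 ≤ re ⟪κ, x⟫_𝕜 := by
  have cross_term : ⟪x, T w⟫_𝕜 = ⟪κ, w⟫_𝕜 := by rw [← hT.isSymmetric, hx]
  have square_expansion :
      re ⟪x - w, T (x - w)⟫_𝕜 = re ⟪κ, x⟫_𝕜 - 2 * re ⟪κ, w⟫_𝕜 + re ⟪w, T w⟫_𝕜 := by
    simp only [map_sub, inner_sub_left, inner_sub_right, hx, cross_term,
      inner_re_symm (𝕜 := 𝕜) x κ, inner_re_symm (𝕜 := 𝕜) w κ]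
    ring
  linarith [hT.re_inner_nonneg_right (x - w)]

/-- The vectors `x₁`, `x₂`, `x` play the roles of `T₁⁻¹ κ₁`, `T₂⁻¹ κ₂` and
`(T₁ + T₂)⁻¹ (κ₁ + κ₂)`. -/
theorem inner_inverse_sum_le_general {T₁ T₂ : E →ₗ[𝕜] E} (hT₁ : T₁.IsPositive)
    (hT₂ : T₂.IsPositive) {κ₁ κ₂ x₁ x₂ x : E} (hx₁ : T₁ x₁ = κ₁) (hx₂ : T₂ x₂ = κ₂)
    (hx : (T₁ + T₂) x = κ₁ + κ₂) :
    re ⟪κ₁ + κ₂, x⟫_𝕜 ≤ re ⟪κ₁, x₁⟫_𝕜 + re ⟪κ₂, x₂⟫_𝕜 :=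
  calc re ⟪κ₁ + κ₂, x⟫_𝕜
      = 2 * re ⟪κ₁ + κ₂, x⟫_𝕜 - re ⟪x, (T₁ + T₂) x⟫_𝕜 := by
        rw [hx, inner_re_symm (𝕜 := 𝕜) x]; ring
    _ = (2 * re ⟪κ₁, x⟫_𝕜 - re ⟪x, T₁ x⟫_𝕜) + (2 * re ⟪κ₂, x⟫_𝕜 - re ⟪x, T₂ x⟫_𝕜) := by
        rw [LinearMap.add_apply, inner_add_left, inner_add_right, map_add, map_add]; ring
    _ ≤ re ⟪κ₁, x₁⟫_𝕜 + re ⟪κ₂, x₂⟫_𝕜 :=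
        add_le_add (two_mul_re_inner_sub_re_inner_apply_le hT₁ hx₁ x)
          (two_mul_re_inner_sub_re_inner_apply_le hT₂ hx₂ x)

end PositiveOperators

theorem apply_ringInverse_apply {R M : Type*} [Semiring R] [TopologicalSpace M] [AddCommMonoid M]
    [Module R M] [ContinuousAdd M] {T : M →L[R] M} (hT : IsUnit T) (x : M) :
    T (Ring.inverse T x) = x :=
  DFunLike.congr_fun (Ring.mul_inverse_cancel T hT) x

/-- For self-adjoint `y₁, y₂ ≥ δ·1` with `δ > 0` and vectors `κ₁, κ₂`,
`⟨κ₁ + κ₂, (y₁ + y₂)⁻¹(κ₁ + κ₂)⟩ ≤ ⟨κ₁, y₁⁻¹ κ₁⟩ + ⟨κ₂, y₂⁻¹ κ₂⟩`. -/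
theorem inner_inverse_sum_le {H : Type*} [NormedAddCommGroup H] [InnerProductSpace ℂ H]
    [CompleteSpace H] (δ : ℝ) (hδ : 0 < δ) (y₁ y₂ : H →L[ℂ] H)
    (hy₁ : IsSelfAdjoint y₁) (hy₂ : IsSelfAdjoint y₂)
    (h₁ : δ • (1 : H →L[ℂ] H) ≤ y₁) (h₂ : δ • (1 : H →L[ℂ] H) ≤ y₂) (κ₁ κ₂ : H) :
    (⟪κ₁ + κ₂, Ring.inverse (y₁ + y₂) (κ₁ + κ₂)⟫_ℂ).re
      ≤ (⟪κ₁, Ring.inverse y₁ κ₁⟫_ℂ).re + (⟪κ₂, Ring.inverse y₂ κ₂⟫_ℂ).re := by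
  have hs₁ : IsStrictlyPositive y₁ := (isStrictlyPositive_one.smul hδ).of_le h₁
  have hs₂ : IsStrictlyPositive y₂ := (isStrictlyPositive_one.smul hδ).of_le h₂
  exact inner_inverse_sum_le_general
    (y₁.nonneg_iff_isPositive.mp hs₁.nonneg).toLinearMap
    (y₂.nonneg_iff_isPositive.mp hs₂.nonneg).toLinearMap
    (apply_ringInverse_apply hs₁.isUnit κ₁) (apply_ringInverse_apply hs₂.isUnit κ₂)
    (apply_ringInverse_apply (hs₁.add_nonneg hs₂.nonneg).isUnit (κ₁ + κ₂))
end

section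
/- Let ε ∈ (0,1/2) and let z, z' be self-adjoint bounded operators on a complex Hilbert space H with z ≥ −ε·1 and z' ≥ −ε·1, and let κ, κ' ∈ H. Then |⟨κ', (1+z')^{-1} κ'⟩ − ⟨κ, (1+z)^{-1} κ⟩| ≤ 4 ‖κ'‖² ‖z − z'‖ + 2 (‖κ'‖ + ‖κ‖) ‖κ' − κ‖, where ‖z − z'‖ is the operator norm. -/
set_option synthInstance.maxHeartbeats 1000000
set_option maxHeartbeats 1000000

open scoped InnerProductSpace

/-!
Coercivity `c‖x‖² ≤ |⟨a x, x⟩|` makes `a` invertible with `‖a⁻¹‖ ≤ c⁻¹`, so the resolvent identity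
`b⁻¹ - a⁻¹ = b⁻¹ (a - b) a⁻¹` controls the change of the operator in `⟨κ, a⁻¹ κ⟩`, and
sesquilinearity controls the change of the vector. If `z ≥ -ε` with `ε < 1/2`, then `1 + z` is
coercive with constant `1/2`.
-/

open scoped NNReal

theorem norm_inverse_sub_inverse_le {R : Type*} [SeminormedRing R] {a b : R}
    (h : IsUnit a ↔ IsUnit b) :
    ‖Ring.inverse a - Ring.inverse b‖ ≤ ‖Ring.inverse a‖ * ‖b - a‖ * ‖Ring.inverse b‖ := by
  rw [Ring.inverse_sub_inverse h]
  exact norm_mul₃_le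

theorem norm_inverse_le_of_antilipschitzWith {𝕜 E : Type*} [NontriviallyNormedField 𝕜]
    [SeminormedAddCommGroup E] [NormedSpace 𝕜 E] {a : E →L[𝕜] E} {K : ℝ≥0}
    (hK : AntilipschitzWith K a) (ha : IsUnit a) : ‖Ring.inverse a‖ ≤ K := by
  refine (Ring.inverse a).opNorm_le_bound K.coe_nonneg fun y ↦ ?_
  have apply_inverse : a (Ring.inverse a y) = y :=
    DFunLike.congr_fun (Ring.mul_inverse_cancel a ha) y
  calc ‖Ring.inverse a y‖ ≤ K * ‖a (Ring.inverse a y)‖ :=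
        hK.le_mul_norm (map_zero a) _
    _ = K * ‖y‖ := by rw [apply_inverse]

theorem norm_inner_apply_self_sub_le {𝕜 E : Type*} [RCLike 𝕜] [SeminormedAddCommGroup E]
    [InnerProductSpace 𝕜 E] (A B : E →L[𝕜] E) (x y : E) :
    ‖⟪y, B y⟫_𝕜 - ⟪x, A x⟫_𝕜‖ ≤ ‖y‖ ^ 2 * ‖B - A‖ + ‖A‖ * (‖y‖ + ‖x‖) * ‖y - x‖ := by
  have decomposition : ⟪y, B y⟫_𝕜 - ⟪x, A x⟫_𝕜 =
      ⟪y, (B - A) y⟫_𝕜 + ⟪y - x, A y⟫_𝕜 + ⟪x, A (y - x)⟫_𝕜 := by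
    simp only [sub_apply, map_sub, inner_sub_left, inner_sub_right]
    ring
  have norm_inner_apply_le (T : E →L[𝕜] E) (u v : E) : ‖⟪u, T v⟫_𝕜‖ ≤ ‖u‖ * (‖T‖ * ‖v‖) := by
    grw [norm_inner_le_norm, T.le_opNorm]
  calc ‖⟪y, B y⟫_𝕜 - ⟪x, A x⟫_𝕜‖
      ≤ ‖⟪y, (B - A) y⟫_𝕜‖ + ‖⟪y - x, A y⟫_𝕜‖ + ‖⟪x, A (y - x)⟫_𝕜‖ :=
        decomposition ▸ norm_add₃_le
    _ ≤ ‖y‖ * (‖B - A‖ * ‖y‖) + ‖y - x‖ * (‖A‖ * ‖y‖) + ‖x‖ * (‖A‖ * ‖y - x‖) := by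
        gcongr <;> apply norm_inner_apply_le
    _ = ‖y‖ ^ 2 * ‖B - A‖ + ‖A‖ * (‖y‖ + ‖x‖) * ‖y - x‖ := by ring

section InnerProduct

variable {𝕜 H : Type*} [RCLike 𝕜] [NormedAddCommGroup H] [InnerProductSpace 𝕜 H]

theorem norm_inverse_le_of_forall_le_norm_inner [CompleteSpace H] {c : ℝ≥0} (hc : 0 < c)
    {a : H →L[𝕜] H} (ha : ∀ x, ‖x‖ ^ 2 * c ≤ ‖⟪a x, x⟫_𝕜‖) : ‖Ring.inverse a‖ ≤ (c : ℝ)⁻¹ :=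
  norm_inverse_le_of_antilipschitzWith (a.antilipschitz_of_forall_le_inner_map hc ha)
    (a.isUnit_of_forall_le_norm_inner_map hc ha)

theorem norm_sq_mul_le_norm_inner_one_add_apply_self [NormedSpace ℝ H] [IsScalarTower ℝ 𝕜 H]
    {c ε : ℝ} (hc : c ≤ 1 - ε) {z : H →L[𝕜] H} (hz : -(ε • (1 : H →L[𝕜] H)) ≤ z) (x : H) :
    ‖x‖ ^ 2 * c ≤ ‖⟪(1 + z) x, x⟫_𝕜‖ := by
  have form_nonneg : 0 ≤ RCLike.re ⟪z x, x⟫_𝕜 + ε * ‖x‖ ^ 2 := by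
    simpa [inner_add_left, inner_smul_left_eq_smul, RCLike.smul_re] using
      ((ContinuousLinearMap.le_def _ _).1 hz).re_inner_nonneg_left x
  calc ‖x‖ ^ 2 * c ≤ ‖x‖ ^ 2 * (1 - ε) := by gcongr
    _ ≤ ‖x‖ ^ 2 + RCLike.re ⟪z x, x⟫_𝕜 := by linarith
    _ = RCLike.re ⟪(1 + z) x, x⟫_𝕜 := by simp [inner_add_left]
    _ ≤ ‖⟪(1 + z) x, x⟫_𝕜‖ := RCLike.re_le_norm _

theorem inner_inverse_continuity_general [CompleteSpace H] {c : ℝ≥0} (hc : 0 < c)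
    {a b : H →L[𝕜] H} (ha : ∀ x, ‖x‖ ^ 2 * c ≤ ‖⟪a x, x⟫_𝕜‖)
    (hb : ∀ x, ‖x‖ ^ 2 * c ≤ ‖⟪b x, x⟫_𝕜‖) (κ κ' : H) :
    ‖⟪κ', Ring.inverse b κ'⟫_𝕜 - ⟪κ, Ring.inverse a κ⟫_𝕜‖
      ≤ (c : ℝ)⁻¹ ^ 2 * ‖κ'‖ ^ 2 * ‖a - b‖ + (c : ℝ)⁻¹ * (‖κ'‖ + ‖κ‖) * ‖κ' - κ‖ := by
  have isUnit_iff : IsUnit b ↔ IsUnit a :=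
    iff_of_true (b.isUnit_of_forall_le_norm_inner_map hc hb)
      (a.isUnit_of_forall_le_norm_inner_map hc ha)
  have norm_inverse_a_le := norm_inverse_le_of_forall_le_norm_inner hc ha
  have norm_inverse_b_le := norm_inverse_le_of_forall_le_norm_inner hc hb
  have norm_inverse_sub_le :
      ‖Ring.inverse b - Ring.inverse a‖ ≤ (c : ℝ)⁻¹ * ‖a - b‖ * (c : ℝ)⁻¹ := by
    grw [norm_inverse_sub_inverse_le isUnit_iff, norm_inverse_b_le, norm_inverse_a_le]
  calc ‖⟪κ', Ring.inverse b κ'⟫_𝕜 - ⟪κ, Ring.inverse a κ⟫_𝕜‖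
      ≤ ‖κ'‖ ^ 2 * ‖Ring.inverse b - Ring.inverse a‖
        + ‖Ring.inverse a‖ * (‖κ'‖ + ‖κ‖) * ‖κ' - κ‖ := norm_inner_apply_self_sub_le ..
    _ ≤ ‖κ'‖ ^ 2 * ((c : ℝ)⁻¹ * ‖a - b‖ * (c : ℝ)⁻¹)
        + (c : ℝ)⁻¹ * (‖κ'‖ + ‖κ‖) * ‖κ' - κ‖ := by
        grw [norm_inverse_sub_le, norm_inverse_a_le]
    _ = _ := by ring

end InnerProduct

/-- Continuity estimate for `(z, κ) ↦ ⟨κ, (1+z)⁻¹ κ⟩` when `z, z' ≥ −ε·1`,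
`ε ∈ (0,1/2)`. -/
theorem inner_inverse_continuity {H : Type*} [NormedAddCommGroup H] [InnerProductSpace ℂ H]
    [CompleteSpace H] (ε : ℝ) (hε : ε ∈ Set.Ioo (0 : ℝ) (1 / 2)) (z z' : H →L[ℂ] H)
    (hz : IsSelfAdjoint z) (hz' : IsSelfAdjoint z')
    (hzb : -(ε • (1 : H →L[ℂ] H)) ≤ z) (hz'b : -(ε • (1 : H →L[ℂ] H)) ≤ z') (κ κ' : H) :
    |(⟪κ', Ring.inverse (1 + z') κ'⟫_ℂ).re - (⟪κ, Ring.inverse (1 + z) κ⟫_ℂ).re|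
      ≤ 4 * ‖κ'‖ ^ 2 * ‖z - z'‖ + 2 * (‖κ'‖ + ‖κ‖) * ‖κ' - κ‖ := by
  have coercive {w : H →L[ℂ] H} (hw : -(ε • (1 : H →L[ℂ] H)) ≤ w) (x : H) :
      ‖x‖ ^ 2 * (2⁻¹ : ℝ≥0) ≤ ‖⟪(1 + w) x, x⟫_ℂ‖ :=
    norm_sq_mul_le_norm_inner_one_add_apply_self (by push_cast; linarith [hε.2]) hw x
  grw [← Complex.sub_re, Complex.abs_re_le_norm,
    inner_inverse_continuity_general (by simp) (coercive hzb) (coercive hz'b) κ κ']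
  norm_num
end

section
/- Let B be a self-adjoint bounded operator on a complex Hilbert space H with B ≥ c·1 for some c > 0, and let P be a positive bounded operator. Define z_* := B^{-1/2} (B^{1/2}(P + B)B^{1/2})^{1/2} B^{-1/2} − 1. Then z_* is positive and satisfies the stationarity equation (1 + z_*) B (1 + z_*) = P + B. Moreover, if P is trace class then z_* is trace class. -/
set_option synthInstance.maxHeartbeats 1000000
set_option maxHeartbeats 1000000

open scoped InnerProductSpace

/-- The partial minimizer `z_* = B^{-1/2} (B^{1/2}(P + B)B^{1/2})^{1/2} B^{-1/2} − 1`. -/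
noncomputable def zStar {H : Type*} [NormedAddCommGroup H] [InnerProductSpace ℂ H]
    [CompleteSpace H] (B P : H →L[ℂ] H) : H →L[ℂ] H :=
  Ring.inverse (CFC.sqrt B) * CFC.sqrt (CFC.sqrt B * (P + B) * CFC.sqrt B)
    * Ring.inverse (CFC.sqrt B) - 1

/-!
`1 + z_*` is the positive solution of the Riccati equation `x B x = P + B`. It depends monotonically
on the right-hand side and equals `1` for `P = 0`, so `z = z_*` is positive. Expanding the equation
gives `P = B z + z B + z B z`, and for every `ε ≥ 0`
`(1 - ε B) z (1 - ε B) + ε P - z = ε z B z + ε² B z B ≥ 0`.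
Since `B ≥ c > 0`, the operator `K = 1 - ε B` has norm less than `1` for small `ε > 0`. As
`Tr (K* Q K) ≤ ‖K‖² Tr Q` for positive `Q`, iterating `z ≤ K z K + ε P` bounds all finite diagonal
sums of `z` by `ε Tr P / (1 - ‖K‖²)`.
-/

open Filter Topology

section RiccatiRoot

variable {A : Type*} [CStarAlgebra A] [PartialOrder A] [StarOrderedRing A]

/-- The positive solution `x = b^{-1/2} (b^{1/2} a b^{1/2})^{1/2} b^{-1/2}` of the Riccati equation
`x b x = a`, that is, the operator geometric mean of `b⁻¹` and `a`. It is meaningful only for `b`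
strictly positive and `a` nonnegative. -/
noncomputable def riccatiRoot (b a : A) : A :=
  Ring.inverse (CFC.sqrt b) * CFC.sqrt (CFC.sqrt b * a * CFC.sqrt b) * Ring.inverse (CFC.sqrt b)

lemma inverse_sqrt_mul_self_mul_inverse_sqrt {b : A} (hb : IsStrictlyPositive b) :
    Ring.inverse (CFC.sqrt b) * b * Ring.inverse (CFC.sqrt b) = 1 := by
  have hsqrt : IsUnit (CFC.sqrt b) := hb.isUnit_cfcSqrt
  nth_rw 2 [← CFC.sqrt_mul_sqrt_self b hb.nonneg]
  rw [Ring.inverse_mul_cancel_left _ _ hsqrt, Ring.mul_inverse_cancel _ hsqrt]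

lemma riccatiRoot_self {b : A} (hb : IsStrictlyPositive b) : riccatiRoot b b = 1 := by
  have hsq : CFC.sqrt b * b * CFC.sqrt b = b * b := by
    nth_rw 2 [← CFC.sqrt_mul_sqrt_self b hb.nonneg]
    rw [← mul_assoc, CFC.sqrt_mul_sqrt_self b hb.nonneg, mul_assoc,
      CFC.sqrt_mul_sqrt_self b hb.nonneg]
  rw [riccatiRoot, hsq, CFC.sqrt_mul_self b hb.nonneg, inverse_sqrt_mul_self_mul_inverse_sqrt hb]

lemma riccatiRoot_mono_right (b : A) {a₁ a₂ : A} (h : a₁ ≤ a₂) :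
    riccatiRoot b a₁ ≤ riccatiRoot b a₂ := by
  have hsqrt : IsSelfAdjoint (CFC.sqrt b) := .of_nonneg (CFC.sqrt_nonneg b)
  exact hsqrt.ringInverse.conjugate_le_conjugate
    (CFC.sqrt_le_sqrt _ _ (hsqrt.conjugate_le_conjugate h))

lemma riccatiRoot_mul_mul_riccatiRoot {a b : A} (hb : IsStrictlyPositive b) (ha : 0 ≤ a) :
    riccatiRoot b a * b * riccatiRoot b a = a := by
  have hsqrt : IsUnit (CFC.sqrt b) := hb.isUnit_cfcSqrt
  have hconj : 0 ≤ CFC.sqrt b * a * CFC.sqrt b :=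
    conjugate_nonneg_of_nonneg ha (CFC.sqrt_nonneg b)
  set s := CFC.sqrt b
  set t := CFC.sqrt (s * a * s)
  calc Ring.inverse s * t * Ring.inverse s * b * (Ring.inverse s * t * Ring.inverse s)
      = Ring.inverse s * t * (Ring.inverse s * b * Ring.inverse s) * t * Ring.inverse s := by
        simp only [mul_assoc]
    _ = Ring.inverse s * (t * t) * Ring.inverse s := by
        rw [inverse_sqrt_mul_self_mul_inverse_sqrt hb, mul_one, mul_assoc (Ring.inverse s)]
    _ = Ring.inverse s * s * a * (s * Ring.inverse s) := by
        rw [CFC.sqrt_mul_sqrt_self _ hconj]; simp only [mul_assoc]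
    _ = a := by
        rw [Ring.inverse_mul_cancel _ hsqrt, Ring.mul_inverse_cancel _ hsqrt, one_mul, mul_one]

end RiccatiRoot

lemma zStar_eq_riccatiRoot_sub_one {H : Type*} [NormedAddCommGroup H] [InnerProductSpace ℂ H]
    [CompleteSpace H] (B P : H →L[ℂ] H) : zStar B P = riccatiRoot B (P + B) - 1 :=
  rfl

lemma exists_pos_norm_one_sub_smul_lt_one {A : Type*} [CStarAlgebra A] [PartialOrder A]
    [StarOrderedRing A] {b : A} (hb : IsStrictlyPositive b) :
    ∃ ε : ℝ, 0 < ε ∧ ‖1 - ε • b‖ < 1 := by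
  cases subsingleton_or_nontrivial A
  · exact ⟨1, one_pos, by simp [Subsingleton.elim (1 - b) 0]⟩
  obtain ⟨c, hc, hcb⟩ : ∃ c > 0, algebraMap ℝ A c ≤ b :=
    (CFC.exists_pos_algebraMap_le_iff hb.isSelfAdjoint).2 fun _ hx ↦ hb.spectrum_pos hx
  have hbound : 0 < ‖b‖ + c := by positivity
  refine ⟨(‖b‖ + c)⁻¹, by positivity, ?_⟩
  set ε := (‖b‖ + c)⁻¹
  have hε : 0 < ε := by positivity
  have hεc : ε * c ≤ 1 := by
    rw [inv_mul_le_one₀ hbound]; linarith [norm_nonneg b]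
  have hnonneg : 0 ≤ 1 - ε • b := by
    have hnorm : ‖ε • b‖ ≤ 1 := by
      rw [norm_smul, Real.norm_of_nonneg hε.le, inv_mul_le_one₀ hbound]; linarith
    have hεb : 0 ≤ ε • b := smul_nonneg hε.le hb.nonneg
    exact sub_nonneg.2 ((CStarAlgebra.norm_le_one_iff_of_nonneg _ hεb).1 hnorm)
  have hle : 1 - ε • b ≤ algebraMap ℝ A (1 - ε * c) := by
    rw [map_sub, map_one, map_mul, ← Algebra.smul_def]
    gcongr
  calc ‖1 - ε • b‖ ≤ 1 - ε * c :=
        (CStarAlgebra.norm_le_iff_le_algebraMap _ (sub_nonneg.2 hεc) hnonneg).2 hle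
    _ < 1 := sub_lt_self 1 (by positivity)

lemma le_conj_one_sub_smul_add_smul {A : Type*} [Ring A] [PartialOrder A] [StarRing A]
    [StarOrderedRing A] [Algebra ℝ A] [PosSMulMono ℝ A] {b p z : A} (hb : 0 ≤ b) (hz : 0 ≤ z)
    (hp : (1 + z) * b * (1 + z) = p + b) {ε : ℝ} (hε : 0 ≤ ε) :
    z ≤ (1 - ε • b) * z * (1 - ε • b) + ε • p := by
  have hp' : p = b * z + z * b + z * b * z := by
    rw [← sub_eq_of_eq_add hp]; noncomm_ring
  have hdiff : (1 - ε • b) * z * (1 - ε • b) + ε • p - z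
      = ε • (z * b * z) + ε ^ 2 • (b * z * b) := by
    rw [hp']
    simp only [sub_mul, mul_sub, one_mul, mul_one, smul_mul_assoc, mul_smul_comm, smul_add,
      smul_sub, smul_smul, ← sq]
    abel
  rw [← sub_nonneg, hdiff]
  exact add_nonneg (smul_nonneg hε (conjugate_nonneg_of_nonneg hb hz))
    (smul_nonneg (sq_nonneg ε) (conjugate_nonneg_of_nonneg hz hb))

lemma apply_zero_le_of_le_succ_add_geometric {a : ℕ → ℝ} {C q : ℝ} (hq₀ : 0 ≤ q) (hq₁ : q < 1)
    (h : ∀ n, a n ≤ a (n + 1) + C * q ^ n) (ha : Tendsto a atTop (𝓝 0)) :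
    a 0 ≤ C / (1 - q) := by
  have htelescope : ∀ n, a 0 - a n ≤ C * ∑ k ∈ Finset.range n, q ^ k := fun n ↦ by
    rw [← Finset.sum_range_sub', Finset.mul_sum]
    exact Finset.sum_le_sum fun k _ ↦ sub_le_iff_le_add'.2 (h k)
  have hgeom := (hasSum_geometric_of_lt_one hq₀ hq₁).tendsto_sum_nat.const_mul C
  simpa [div_eq_mul_inv] using
    le_of_tendsto_of_tendsto' (ha.const_sub (a 0)) hgeom htelescope

section HilbertSchmidt

variable {𝕜 E G ι κ : Type*} [RCLike 𝕜] [NormedAddCommGroup E] [InnerProductSpace 𝕜 E]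
  [NormedAddCommGroup G] [InnerProductSpace 𝕜 G]

lemma hasSum_norm_inner_sq (b : HilbertBasis ι 𝕜 G) (x : G) :
    HasSum (fun j ↦ ‖⟪b j, x⟫_𝕜‖ ^ 2) (‖x‖ ^ 2) := by
  have h := RCLike.hasSum_re 𝕜 (b.hasSum_inner_mul_inner x x)
  simpa only [inner_mul_symm_re_eq_norm, norm_mul, norm_inner_symm x, ← sq,
    inner_self_eq_norm_sq] using h

lemma sum_norm_sq_apply_le_tsum_norm_sq_adjoint [CompleteSpace E] [CompleteSpace G] {e : κ → E}
    (he : Orthonormal 𝕜 e) (b : HilbertBasis ι 𝕜 G) (T : E →L[𝕜] G)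
    (hT : Summable fun j ↦ ‖T.adjoint (b j)‖ ^ 2) (s : Finset κ) :
    ∑ i ∈ s, ‖T (e i)‖ ^ 2 ≤ ∑' j, ‖T.adjoint (b j)‖ ^ 2 := by
  refine hasSum_le (fun j ↦ ?_) (hasSum_sum fun i _ ↦ hasSum_norm_inner_sq b (T (e i))) hT.hasSum
  calc ∑ i ∈ s, ‖⟪b j, T (e i)⟫_𝕜‖ ^ 2
      = ∑ i ∈ s, ‖⟪e i, T.adjoint (b j)⟫_𝕜‖ ^ 2 := by
        simp only [T.adjoint_inner_right, norm_inner_symm (b j)]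
    _ ≤ ‖T.adjoint (b j)‖ ^ 2 := he.sum_inner_products_le _

end HilbertSchmidt

section QuadraticForm

variable {𝕜 E κ : Type*} [RCLike 𝕜] [NormedAddCommGroup E] [InnerProductSpace 𝕜 E]

lemma tendsto_sum_re_inner_pow_apply {K : E →L[𝕜] E} (hK : ‖K‖ < 1) (Z : E →L[𝕜] E) (e : κ → E)
    (s : Finset κ) :
    Tendsto (fun n : ℕ ↦ ∑ i ∈ s, RCLike.re ⟪(K ^ n) (e i), Z ((K ^ n) (e i))⟫_𝕜) atTop (𝓝 0) := by
  have hlim : Tendsto (fun n : ℕ ↦ K ^ n) atTop (𝓝 0) :=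
    tendsto_pow_atTop_nhds_zero_of_norm_lt_one hK
  have hcont : Continuous fun X : E →L[𝕜] E ↦ ∑ i ∈ s, RCLike.re ⟪X (e i), Z (X (e i))⟫_𝕜 := by
    fun_prop
  simpa [Function.comp_def] using (hcont.tendsto 0).comp hlim

lemma re_inner_le_of_le_conj_add [CompleteSpace E] {Z K Q : E →L[𝕜] E}
    (h : Z ≤ star K * Z * K + Q) (x : E) :
    RCLike.re ⟪x, Z x⟫_𝕜 ≤ RCLike.re ⟪K x, Z (K x)⟫_𝕜 + RCLike.re ⟪x, Q x⟫_𝕜 := by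
  have hpos : 0 ≤ RCLike.re ⟪x, (star K * Z * K + Q - Z) x⟫_𝕜 :=
    ((ContinuousLinearMap.le_def _ _).1 h).re_inner_nonneg_right x
  simp only [sub_apply, add_apply, mul_apply_eq_comp, inner_sub_right, inner_add_right,
    ContinuousLinearMap.star_eq_adjoint, K.adjoint_inner_right, map_sub, map_add] at hpos
  linarith

end QuadraticForm

lemma opNorm_pow_le {𝕜 E : Type*} [NontriviallyNormedField 𝕜] [SeminormedAddCommGroup E]
    [NormedSpace 𝕜 E] (K : E →L[𝕜] E) : ∀ n : ℕ, ‖K ^ n‖ ≤ ‖K‖ ^ n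
  | 0 => by rw [pow_zero, pow_zero]; exact ContinuousLinearMap.norm_id_le
  | n + 1 => norm_pow_le' K n.succ_pos

section Trace

variable {E H ι κ : Type*} [NormedAddCommGroup E] [InnerProductSpace ℂ E] [CompleteSpace E]
  [NormedAddCommGroup H] [InnerProductSpace ℂ H] [CompleteSpace H]

lemma re_inner_apply_eq_norm_sqrt_sq {Q : H →L[ℂ] H} (hQ : 0 ≤ Q) (x : H) :
    (⟪x, Q x⟫_ℂ).re = ‖CFC.sqrt Q x‖ ^ 2 := by
  have hsqrt : (CFC.sqrt Q).adjoint = CFC.sqrt Q := (CFC.sqrt_nonneg Q).star_eq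
  nth_rw 1 [← CFC.sqrt_mul_sqrt_self Q hQ]
  rw [mul_apply_eq_comp, ← ContinuousLinearMap.adjoint_inner_left, hsqrt]
  exact inner_self_eq_norm_sq (𝕜 := ℂ) _

lemma sum_re_inner_apply_le_opNorm_sq_mul_tsum {e : κ → E} (he : Orthonormal ℂ e)
    (b : HilbertBasis ι ℂ H) {Q : H →L[ℂ] H} (hQ : 0 ≤ Q)
    (hsum : Summable fun j ↦ (⟪b j, Q (b j)⟫_ℂ).re) (X : E →L[ℂ] H) (s : Finset κ) :
    ∑ i ∈ s, (⟪X (e i), Q (X (e i))⟫_ℂ).re ≤ ‖X‖ ^ 2 * ∑' j, (⟪b j, Q (b j)⟫_ℂ).re := by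
  simp only [re_inner_apply_eq_norm_sqrt_sq hQ] at hsum ⊢
  set T : E →L[ℂ] H := CFC.sqrt Q ∘L X
  have hadjoint (j : ι) : ‖T.adjoint (b j)‖ ^ 2 ≤ ‖X‖ ^ 2 * ‖CFC.sqrt Q (b j)‖ ^ 2 := by
    have hsqrt : (CFC.sqrt Q).adjoint = CFC.sqrt Q := (CFC.sqrt_nonneg Q).star_eq
    rw [ContinuousLinearMap.adjoint_comp, hsqrt, ← mul_pow, ContinuousLinearMap.comp_apply,
      ← LinearIsometryEquiv.norm_map ContinuousLinearMap.adjoint X]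
    gcongr
    exact ContinuousLinearMap.le_opNorm _ _
  have hbound := hsum.mul_left (‖X‖ ^ 2)
  have hT : Summable fun j ↦ ‖T.adjoint (b j)‖ ^ 2 :=
    hbound.of_nonneg_of_le (fun _ ↦ sq_nonneg _) hadjoint
  calc ∑ i ∈ s, ‖T (e i)‖ ^ 2 ≤ ∑' j, ‖T.adjoint (b j)‖ ^ 2 :=
        sum_norm_sq_apply_le_tsum_norm_sq_adjoint he b T hT s
    _ ≤ ∑' j, ‖X‖ ^ 2 * ‖CFC.sqrt Q (b j)‖ ^ 2 := hT.tsum_le_tsum hadjoint hbound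
    _ = ‖X‖ ^ 2 * ∑' j, ‖CFC.sqrt Q (b j)‖ ^ 2 := tsum_mul_left

lemma sum_re_inner_le_of_le_conj_add {e : κ → H} (he : Orthonormal ℂ e) (b : HilbertBasis ι ℂ H)
    {Z K Q : H →L[ℂ] H} (hK : ‖K‖ < 1) (hQ : 0 ≤ Q)
    (hsum : Summable fun j ↦ (⟪b j, Q (b j)⟫_ℂ).re) (h : Z ≤ star K * Z * K + Q) (s : Finset κ) :
    ∑ i ∈ s, (⟪e i, Z (e i)⟫_ℂ).re ≤ (∑' j, (⟪b j, Q (b j)⟫_ℂ).re) / (1 - ‖K‖ ^ 2) := by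
  set τ := ∑' j, (⟪b j, Q (b j)⟫_ℂ).re
  have hτ : 0 ≤ τ := tsum_nonneg fun j ↦ by
    rw [re_inner_apply_eq_norm_sqrt_sq hQ]; positivity
  set a : ℕ → ℝ := fun n ↦ ∑ i ∈ s, (⟪(K ^ n) (e i), Z ((K ^ n) (e i))⟫_ℂ).re
  have hstep (n : ℕ) : a n ≤ a (n + 1) + τ * (‖K‖ ^ 2) ^ n :=
    calc a n ≤ a (n + 1) + ∑ i ∈ s, (⟪(K ^ n) (e i), Q ((K ^ n) (e i))⟫_ℂ).re := by
          simp only [a, ← Finset.sum_add_distrib, pow_succ', mul_apply_eq_comp]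
          exact Finset.sum_le_sum fun i _ ↦ re_inner_le_of_le_conj_add h _
      _ ≤ a (n + 1) + ‖K ^ n‖ ^ 2 * τ := by
          gcongr
          exact sum_re_inner_apply_le_opNorm_sq_mul_tsum he b hQ hsum (K ^ n) s
      _ ≤ a (n + 1) + (‖K‖ ^ n) ^ 2 * τ := by
          gcongr
          exact opNorm_pow_le K n
      _ = a (n + 1) + τ * (‖K‖ ^ 2) ^ n := by ring
  have hK₂ : ‖K‖ ^ 2 < 1 := pow_lt_one₀ (norm_nonneg K) hK two_ne_zero
  exact apply_zero_le_of_le_succ_add_geometric (sq_nonneg _) hK₂ hstep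
    (tendsto_sum_re_inner_pow_apply hK Z e s)

lemma IsPosTraceClass.smul {Q : H →L[ℂ] H} (hQ : IsPosTraceClass Q) {r : ℝ} (hr : 0 ≤ r) :
    IsPosTraceClass (r • Q) := by
  refine ⟨smul_nonneg hr hQ.1, (hQ.2.mul_left r).congr fun i ↦ ?_⟩
  simp [opDiag, inner_smul_right_eq_smul]

lemma IsPosTraceClass.of_le_conj_add {Z K Q : H →L[ℂ] H} (hQ : IsPosTraceClass Q) (hZ : 0 ≤ Z)
    (hK : ‖K‖ < 1) (h : Z ≤ star K * Z * K + Q) : IsPosTraceClass Z := by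
  have hdiag (i) : 0 ≤ opDiag Z i :=
    ((ContinuousLinearMap.nonneg_iff_isPositive Z).1 hZ).re_inner_nonneg_right _
  exact ⟨hZ, summable_of_sum_le hdiag fun s ↦
    sum_re_inner_le_of_le_conj_add (traceBasis H).orthonormal (traceBasis H) hK hQ.1 hQ.2 h s⟩

end Trace

/-- For `B ≥ c·1` self-adjoint (`c > 0`) and `P` positive bounded, the operator
`z_* = B^{-1/2}(B^{1/2}(P+B)B^{1/2})^{1/2}B^{-1/2} − 1` is positive and satisfies
`(1 + z_*) B (1 + z_*) = P + B`; if moreover `P` is trace class, so is `z_*`. -/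
theorem zStar_stationarity {H : Type*} [NormedAddCommGroup H] [InnerProductSpace ℂ H]
    [CompleteSpace H] (B P : H →L[ℂ] H) (c : ℝ) (hc : 0 < c) (hBsa : IsSelfAdjoint B)
    (hB : c • (1 : H →L[ℂ] H) ≤ B) (hP : 0 ≤ P) :
    0 ≤ zStar B P ∧ (1 + zStar B P) * B * (1 + zStar B P) = P + B ∧
      (IsPosTraceClass P → IsPosTraceClass (zStar B P)) := by
  have hBpos : IsStrictlyPositive B := (isStrictlyPositive_one.smul hc).of_le hB
  have hpos : 0 ≤ zStar B P := by
    rw [zStar_eq_riccatiRoot_sub_one, sub_nonneg, ← riccatiRoot_self hBpos]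
    exact riccatiRoot_mono_right B (le_add_of_nonneg_left hP)
  have heq : (1 + zStar B P) * B * (1 + zStar B P) = P + B := by
    rw [zStar_eq_riccatiRoot_sub_one, add_sub_cancel,
      riccatiRoot_mul_mul_riccatiRoot hBpos (add_nonneg hP hBpos.nonneg)]
  refine ⟨hpos, heq, fun hPtr ↦ ?_⟩
  obtain ⟨ε, hε, hcontr⟩ := exists_pos_norm_one_sub_smul_lt_one hBpos
  have hK : IsSelfAdjoint (1 - ε • B) := .sub (.one _) (.smul (.all ε) hBpos.isSelfAdjoint)
  refine (hPtr.smul hε.le).of_le_conj_add hpos hcontr ?_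
  rw [hK.star_eq]
  exact le_conj_one_sub_smul_add_smul hBpos.nonneg hpos heq hε.le
end

section
/- For all real numbers a, b > 0 and c > 0, the function F : [0,∞) × [0,∞) → ℝ defined by F(t,s) = a·t²/(1+t) + b·s²/(1+s) − c·t·s·(1/(1+t) + 1/(1+s)) is not convex on the convex set [0,∞) × [0,∞). -/
set_option synthInstance.maxHeartbeats 1000000
set_option maxHeartbeats 1000000

open scoped InnerProductSpace

/-!
In the coordinates `u = 1 + t`, `v = 1 + s` the function is, up to an affine summand,
`c * (u / v + v / u) + (a - c) / u + (b - c) / v`. Scaling `(u, v)` to infinity leaves only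
`c * (u / v + v / u)`, so convexity would pass to this limit on the open quadrant. But the limit is
constant along rays, and a convex function on an open cone that is constant along rays is constant:
writing `x + y = l • (l⁻¹ • x) + (1 - l) • ((1 - l)⁻¹ • y)` and letting `l → 1`, its value at
`x + y` is at most its value at `x`.
-/

open Set Filter Topology

section ConvexRays

variable {E : Type*} [AddCommGroup E] [Module ℝ E] {s K : Set E} {f g : E → ℝ}

theorem convexOn_of_tendsto_smul (hf : ConvexOn ℝ s f) (hK : Convex ℝ K)
    (hKs : ∀ x ∈ K, ∀ᶠ r : ℝ in atTop, r • x ∈ s)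
    (hlim : ∀ x ∈ K, Tendsto (fun r : ℝ ↦ f (r • x)) atTop (𝓝 (g x))) :
    ConvexOn ℝ K g := by
  refine ⟨hK, fun x hx y hy α β hα hβ hαβ ↦ ?_⟩
  refine le_of_tendsto_of_tendsto (hlim _ (hK hx hy hα hβ hαβ))
    (((hlim x hx).const_smul α).add ((hlim y hy).const_smul β)) ?_
  filter_upwards [hKs x hx, hKs y hy] with r hrx hry
  have hscale : r • (α • x + β • y) = α • r • x + β • r • y := by
    rw [smul_add, smul_comm r α, smul_comm r β]
  simpa only [hscale] using hf.2 hrx hry hα hβ hαβ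

theorem apply_add_le_of_convexOn_of_smul_invariant (hg : ConvexOn ℝ K g)
    (hK : ∀ r : ℝ, 0 < r → ∀ x ∈ K, r • x ∈ K)
    (hinv : ∀ r : ℝ, 0 < r → ∀ x ∈ K, g (r • x) = g x)
    {x y : E} (hx : x ∈ K) (hy : y ∈ K) : g (x + y) ≤ g x := by
  have hbound : ∀ l ∈ Ioo (0 : ℝ) 1, g (x + y) ≤ l * g x + (1 - l) * g y := by
    rintro l ⟨hl₀, hl₁⟩
    have hm₀ : 0 < 1 - l := sub_pos.2 hl₁
    have hconv := hg.2 (hK _ (inv_pos.2 hl₀) x hx) (hK _ (inv_pos.2 hm₀) y hy)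
      hl₀.le hm₀.le (add_sub_cancel l 1)
    rwa [smul_inv_smul₀ hl₀.ne', smul_inv_smul₀ hm₀.ne', hinv _ (inv_pos.2 hl₀) x hx,
      hinv _ (inv_pos.2 hm₀) y hy] at hconv
  have hlim : Tendsto (fun l : ℝ ↦ l * g x + (1 - l) * g y) (𝓝[<] 1) (𝓝 (g x)) := by
    have hcont : Continuous fun l : ℝ ↦ l * g x + (1 - l) * g y := by fun_prop
    simpa using (hcont.tendsto 1).mono_left nhdsWithin_le_nhds
  exact ge_of_tendsto hlim (mem_of_superset (Ioo_mem_nhdsLT zero_lt_one) hbound)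

theorem eq_of_convexOn_of_smul_invariant [TopologicalSpace E] [ContinuousSub E]
    [ContinuousSMul ℝ E] (hg : ConvexOn ℝ K g) (hopen : IsOpen K)
    (hK : ∀ r : ℝ, 0 < r → ∀ x ∈ K, r • x ∈ K)
    (hinv : ∀ r : ℝ, 0 < r → ∀ x ∈ K, g (r • x) = g x)
    {x y : E} (hx : x ∈ K) (hy : y ∈ K) : g x = g y := by
  have hle : ∀ z ∈ K, ∀ w ∈ K, g z ≤ g w := by
    intro z hz w hw
    have hcont : Continuous fun ε : ℝ ↦ z - ε • w := by fun_prop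
    have hnear : ∀ᶠ ε : ℝ in 𝓝[>] 0, z - ε • w ∈ K :=
      (hcont.continuousAt.eventually_mem (hopen.mem_nhds (by simpa using hz))).filter_mono
        nhdsWithin_le_nhds
    obtain ⟨ε, hεK, hε⟩ := (hnear.and self_mem_nhdsWithin).exists
    calc g z = g (ε • w + (z - ε • w)) := by rw [add_sub_cancel]
      _ ≤ g (ε • w) :=
        apply_add_le_of_convexOn_of_smul_invariant hg hK hinv (hK ε hε w hw) hεK
      _ = g w := hinv ε hε w hw
  exact (hle x hx y hy).antisymm (hle y hy x hx)

end ConvexRays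

/-- The energy restricted to the two-parameter family of rank-two operators, with `p = (t, s)`. -/
noncomputable def rankTwoEnergy (a b c : ℝ) (p : ℝ × ℝ) : ℝ :=
  a * p.1 ^ 2 / (1 + p.1) + b * p.2 ^ 2 / (1 + p.2)
    - c * p.1 * p.2 * (1 / (1 + p.1) + 1 / (1 + p.2))

/-- The energy in the coordinates `p = (1 + t, 1 + s)`, stripped of its affine part. -/
noncomputable def reducedEnergy (a b c : ℝ) (p : ℝ × ℝ) : ℝ :=
  c * (p.1 / p.2 + p.2 / p.1) + (a - c) / p.1 + (b - c) / p.2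

section RankTwoEnergy

variable {a b c : ℝ}

theorem reducedEnergy_eq_rankTwoEnergy_sub {p : ℝ × ℝ} (h₁ : p.1 ≠ 0) (h₂ : p.2 ≠ 0) :
    reducedEnergy a b c p = rankTwoEnergy a b c (-1 + p)
      - ((a - c) * p.1 + (b - c) * p.2 - 2 * (a + b - c)) := by
  simp only [reducedEnergy, rankTwoEnergy, Prod.fst_add, Prod.snd_add, Prod.fst_neg, Prod.snd_neg,
    Prod.fst_one, Prod.snd_one, add_neg_cancel_left]
  field_simp
  ring

theorem convexOn_reducedEnergy (hF : ConvexOn ℝ (Ici 0 ×ˢ Ici 0) (rankTwoEnergy a b c)) :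
    ConvexOn ℝ (Ici 1 ×ˢ Ici 1) (reducedEnergy a b c) := by
  have hconv : Convex ℝ (Ici (1 : ℝ) ×ˢ Ici (1 : ℝ)) := (convex_Ici 1).prod (convex_Ici 1)
  have htranslate : ConvexOn ℝ (Ici 1 ×ˢ Ici 1) fun p ↦ rankTwoEnergy a b c (-1 + p) :=
    (hF.translate_right (-1)).subset (fun p hp ↦ by simpa [mem_prod, -Ici_prod_Ici] using hp) hconv
  have haffine : ConcaveOn ℝ (Ici 1 ×ˢ Ici 1)
      fun p : ℝ × ℝ ↦ (a - c) * p.1 + (b - c) * p.2 - 2 * (a + b - c) :=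
    (((a - c) • LinearMap.fst ℝ ℝ ℝ + (b - c) • LinearMap.snd ℝ ℝ ℝ).concaveOn hconv).add_const _
  refine (htranslate.sub haffine).congr fun p ⟨h₁, h₂⟩ ↦ ?_
  exact (reducedEnergy_eq_rankTwoEnergy_sub (zero_lt_one.trans_le h₁).ne'
    (zero_lt_one.trans_le h₂).ne').symm

theorem tendsto_reducedEnergy_smul {p : ℝ × ℝ} (h₁ : 0 < p.1) (h₂ : 0 < p.2) :
    Tendsto (fun r : ℝ ↦ reducedEnergy a b c (r • p)) atTop
      (𝓝 (c * (p.1 / p.2 + p.2 / p.1))) := by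
  have hdiv : ∀ d x : ℝ, 0 < x → Tendsto (fun r : ℝ ↦ d / (r * x)) atTop (𝓝 0) :=
    fun d x hx ↦ tendsto_const_nhds.div_atTop (tendsto_id.atTop_mul_const hx)
  have hsum := ((tendsto_const_nhds (x := c * (p.1 / p.2 + p.2 / p.1))).add
    (hdiv (a - c) p.1 h₁)).add (hdiv (b - c) p.2 h₂)
  rw [add_zero, add_zero] at hsum
  refine hsum.congr' ?_
  filter_upwards [eventually_ne_atTop 0] with r hr
  simp only [reducedEnergy, Prod.smul_fst, Prod.smul_snd, smul_eq_mul, mul_div_mul_left _ _ hr]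

theorem eventually_smul_mem_Ici_prod_Ici {p : ℝ × ℝ} (h₁ : 0 < p.1) (h₂ : 0 < p.2) (m n : ℝ) :
    ∀ᶠ r : ℝ in atTop, r • p ∈ Ici m ×ˢ Ici n :=
  ((tendsto_id.atTop_mul_const h₁).eventually_ge_atTop m).and
    ((tendsto_id.atTop_mul_const h₂).eventually_ge_atTop n)

theorem not_convexOn_const_mul_div_add_div (hc : c ≠ 0) :
    ¬ ConvexOn ℝ (Ioi 0 ×ˢ Ioi 0) fun p : ℝ × ℝ ↦ c * (p.1 / p.2 + p.2 / p.1) := by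
  intro hconv
  have heq := eq_of_convexOn_of_smul_invariant hconv (isOpen_Ioi.prod isOpen_Ioi)
    (fun r hr p hp ↦ ⟨mul_pos hr hp.1, mul_pos hr hp.2⟩)
    (fun r hr p _ ↦ by
      simp only [Prod.smul_fst, Prod.smul_snd, smul_eq_mul, mul_div_mul_left _ _ hr.ne'])
    (x := (1, 1)) (y := (1, 2)) (by simp) (by simp)
  have hvalues : (1 / 1 + 1 / 1 : ℝ) = 1 / 2 + 2 / 1 := mul_left_cancel₀ hc heq
  norm_num at hvalues

end RankTwoEnergy

theorem rank_two_restriction_not_convex_general (a b c : ℝ) (hc : c ≠ 0) :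
    ¬ ConvexOn ℝ (Ici 0 ×ˢ Ici 0) (rankTwoEnergy a b c) := fun hF ↦
  not_convexOn_const_mul_div_add_div hc <|
    convexOn_of_tendsto_smul (convexOn_reducedEnergy hF) ((convex_Ioi 0).prod (convex_Ioi 0))
      (fun _ hp ↦ eventually_smul_mem_Ici_prod_Ici hp.1 hp.2 1 1)
      (fun _ hp ↦ tendsto_reducedEnergy_smul hp.1 hp.2)

/-- For all `a, b, c > 0`, the function
`F(t,s) = a t²/(1+t) + b s²/(1+s) − c t s (1/(1+t) + 1/(1+s))` is not convex on
`[0,∞) × [0,∞)`. -/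
theorem rank_two_restriction_not_convex (a b c : ℝ) (ha : 0 < a) (hb : 0 < b) (hc : 0 < c) :
    ¬ ConvexOn ℝ (Set.Ici (0 : ℝ) ×ˢ Set.Ici (0 : ℝ))
      (fun p : ℝ × ℝ =>
        a * p.1 ^ 2 / (1 + p.1) + b * p.2 ^ 2 / (1 + p.2)
          - c * p.1 * p.2 * (1 / (1 + p.1) + 1 / (1 + p.2))) :=
  rank_two_restriction_not_convex_general a b c hc.ne'
end

section
/- Let A be a positive bounded operator on a complex Hilbert space H. Then for every ψ ∈ H, the function λ ↦ λ^{-1/2} A(A + λ·1)^{-1} ψ is Bochner integrable on (0,∞) and A^{1/2} ψ = (1/π) ∫₀^∞ λ^{-1/2} A (A + λ·1)^{-1} ψ dλ. -/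
set_option synthInstance.maxHeartbeats 1000000
set_option maxHeartbeats 1000000

open scoped InnerProductSpace

open MeasureTheory

/-!
For real `x ≥ 0` and `p ∈ (0, 1)`, scaling `t` by `x` in `∫₀^∞ t ^ (p - 1) x / (t + x) dt` gives
`C x ^ p`, where `C` is the value at `x = 1`; for `p = 1 / 2` the substitution `t = s ^ 2` gives
`C = π`. On the spectrum of a positive element `a` the integrand is dominated by its value at
`x = ‖a‖ ‖1‖`, so the continuous functional calculus commutes with the integral, and it sends the
integrand to `t ^ (p - 1) a (a + t)⁻¹`. The integral therefore converges in norm, and in the case of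
operators it may be evaluated at `ψ`.
-/

section RpowIntegral

open Real Set

lemma integral_rpowIntegrand₀₁_one_half_one : ∫ t in Ioi 0, rpowIntegrand₀₁ (1 / 2) t 1 = π := by
  have integrand_eq {t : ℝ} (ht : 0 < t) : rpowIntegrand₀₁ (1 / 2) t 1 =
      (1 / 2 * t ^ (1 / 2 - 1 : ℝ)) • (2 * (1 + (t ^ (1 / 2 : ℝ)) ^ 2)⁻¹) := by
    have sq_rpow_half : (t ^ (1 / 2 : ℝ)) ^ 2 = t := by rw [← sqrt_eq_rpow, sq_sqrt ht.le]
    rw [rpowIntegrand₀₁_eq_pow_div (by norm_num) ht.le zero_le_one, sq_rpow_half, smul_eq_mul]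
    ring
  calc ∫ t in Ioi 0, rpowIntegrand₀₁ (1 / 2) t 1
      = ∫ t in Ioi 0, (1 / 2 * t ^ (1 / 2 - 1 : ℝ)) • (2 * (1 + (t ^ (1 / 2 : ℝ)) ^ 2)⁻¹) :=
        setIntegral_congr_fun measurableSet_Ioi fun _ ht ↦ integrand_eq ht
    _ = ∫ s in Ioi (0 : ℝ), 2 * (1 + s ^ 2)⁻¹ :=
        integral_comp_rpow_Ioi_of_pos (g := fun s ↦ 2 * (1 + s ^ 2)⁻¹) one_half_pos
    _ = π := by
        rw [integral_const_mul, integral_Ioi_inv_one_add_sq, arctan_zero]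
        ring

variable {A : Type*} [NormedRing A] [NormedAlgebra ℝ A] [PartialOrder A]
  [NonnegSpectrumClass ℝ A] {a : A} {p t : ℝ}

lemma norm_rpowIntegrand₀₁_le_of_mem_spectrum [CompleteSpace A] (hp : p ∈ Ioo 0 1) (ht : 0 ≤ t)
    (ha : 0 ≤ a) {x : ℝ} (hx : x ∈ spectrum ℝ a) :
    ‖rpowIntegrand₀₁ p t x‖ ≤ rpowIntegrand₀₁ p t (‖a‖ * ‖(1 : A)‖) := by
  have x_nonneg : 0 ≤ x := spectrum_nonneg_of_nonneg ha hx
  have x_le : x ≤ ‖a‖ * ‖(1 : A)‖ := (le_abs_self x).trans (spectrum.norm_le_norm_mul_of_mem hx)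
  rw [norm_of_nonneg (rpowIntegrand₀₁_nonneg hp.1 ht x_nonneg)]
  exact rpowIntegrand₀₁_monotoneOn hp ht x_nonneg (x_nonneg.trans x_le) x_le

variable [StarRing A] [StarOrderedRing A] [ContinuousFunctionalCalculus ℝ A IsSelfAdjoint]

lemma cfc_inv_add_const_eq_ringInverse (ht : 0 < t) (ha : 0 ≤ a) :
    cfc (fun x : ℝ ↦ (x + t)⁻¹) a = Ring.inverse (a + t • 1) := by
  have add_ne_zero : ∀ x ∈ spectrum ℝ a, x + t ≠ 0 := fun x hx ↦
    (add_pos_of_nonneg_of_pos (spectrum_nonneg_of_nonneg ha hx) ht).ne'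
  rw [cfc_inv (fun x : ℝ ↦ x + t) a add_ne_zero, cfc_add_const t (fun x ↦ x) a, cfc_id' ℝ a,
    Algebra.algebraMap_eq_smul_one]

lemma cfc_rpowIntegrand₀₁_eq_smul_mul_ringInverse (hp : p ∈ Ioo 0 1) (ht : 0 < t) (ha : 0 ≤ a) :
    cfc (rpowIntegrand₀₁ p t) a = t ^ (p - 1) • (a * Ring.inverse (a + t • 1)) := by
  have spectrum_nonneg : ∀ x ∈ spectrum ℝ a, 0 ≤ x := fun _ hx ↦ spectrum_nonneg_of_nonneg ha hx
  have continuousOn_inv : ContinuousOn (fun x : ℝ ↦ (x + t)⁻¹) (spectrum ℝ a) :=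
    ContinuousOn.inv₀ (by fun_prop) fun x hx ↦
      (add_pos_of_nonneg_of_pos (spectrum_nonneg x hx) ht).ne'
  calc cfc (rpowIntegrand₀₁ p t) a
      = cfc (fun x ↦ t ^ (p - 1) • (x * (x + t)⁻¹)) a := cfc_congr fun x hx ↦ by
        rw [rpowIntegrand₀₁_eq_pow_div hp ht.le (spectrum_nonneg x hx), smul_eq_mul, add_comm t,
          mul_div_assoc, div_eq_mul_inv]
    _ = t ^ (p - 1) • (a * Ring.inverse (a + t • 1)) := by
        rw [cfc_smul _ _ a, cfc_mul (fun x ↦ x) _ a, cfc_id' ℝ a,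
          cfc_inv_add_const_eq_ringInverse ht ha]

variable [CompleteSpace A]

lemma integrableOn_cfc_rpowIntegrand₀₁ (hp : p ∈ Ioo 0 1) (ha : 0 ≤ a) :
    IntegrableOn (fun t ↦ cfc (rpowIntegrand₀₁ p t) a) (Ioi 0) :=
  integrableOn_cfc measurableSet_Ioi _ _ a
    (continuousOn_rpowIntegrand₀₁_uncurry hp _ fun _ hx ↦ spectrum_nonneg_of_nonneg ha hx)
    (ae_restrict_of_forall_mem measurableSet_Ioi fun _ ht _ hx ↦
      norm_rpowIntegrand₀₁_le_of_mem_spectrum hp (le_of_lt ht) ha hx)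
    (integrableOn_rpowIntegrand₀₁_Ioi hp (by positivity)).hasFiniteIntegral

lemma integral_cfc_rpowIntegrand₀₁ (hp : p ∈ Ioo 0 1) (ha : 0 ≤ a) :
    ∫ t in Ioi 0, cfc (rpowIntegrand₀₁ p t) a =
      (∫ t in Ioi 0, rpowIntegrand₀₁ p t 1) • a ^ p := by
  have spectrum_nonneg : ∀ x ∈ spectrum ℝ a, 0 ≤ x := fun _ hx ↦ spectrum_nonneg_of_nonneg ha hx
  calc ∫ t in Ioi 0, cfc (rpowIntegrand₀₁ p t) a
      = cfc (fun x ↦ ∫ t in Ioi 0, rpowIntegrand₀₁ p t x) a := .symm <|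
        cfc_setIntegral measurableSet_Ioi _ _ a
          (continuousOn_rpowIntegrand₀₁_uncurry hp _ spectrum_nonneg)
          (ae_restrict_of_forall_mem measurableSet_Ioi fun _ ht _ hx ↦
            norm_rpowIntegrand₀₁_le_of_mem_spectrum hp (le_of_lt ht) ha hx)
          (integrableOn_rpowIntegrand₀₁_Ioi hp (by positivity)).hasFiniteIntegral
    _ = cfc (fun x ↦ (∫ t in Ioi 0, rpowIntegrand₀₁ p t 1) • x ^ p) a := cfc_congr fun x hx ↦ by
        rw [integral_rpowIntegrand₀₁_eq_rpow_mul_const hp (spectrum_nonneg x hx), smul_eq_mul,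
          mul_comm]
    _ = (∫ t in Ioi 0, rpowIntegrand₀₁ p t 1) • a ^ p := by
        rw [cfc_smul _ (fun x ↦ x ^ p) a (continuousOn_id.rpow_const fun _ _ ↦ .inr hp.1.le),
          CFC.rpow_eq_cfc_real ha]

lemma integrableOn_rpow_smul_mul_ringInverse (hp : p ∈ Ioo 0 1) (ha : 0 ≤ a) :
    IntegrableOn (fun t : ℝ ↦ t ^ (p - 1) • (a * Ring.inverse (a + t • 1))) (Ioi 0) :=
  (integrableOn_cfc_rpowIntegrand₀₁ hp ha).congr_fun
    (fun _ ht ↦ cfc_rpowIntegrand₀₁_eq_smul_mul_ringInverse hp ht ha) measurableSet_Ioi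

lemma integral_rpow_smul_mul_ringInverse (hp : p ∈ Ioo 0 1) (ha : 0 ≤ a) :
    ∫ t in Ioi (0 : ℝ), t ^ (p - 1) • (a * Ring.inverse (a + t • 1)) =
      (∫ t in Ioi 0, rpowIntegrand₀₁ p t 1) • a ^ p := by
  rw [← integral_cfc_rpowIntegrand₀₁ hp ha]
  exact setIntegral_congr_fun measurableSet_Ioi fun _ ht ↦
    (cfc_rpowIntegrand₀₁_eq_smul_mul_ringInverse hp ht ha).symm

theorem sqrt_integral_representation_general (ha : 0 ≤ a) :
    IntegrableOn (fun t : ℝ ↦ t ^ (-(1 / 2) : ℝ) • (a * Ring.inverse (a + t • 1))) (Ioi 0) ∧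
    CFC.sqrt a =
      (1 / π) • ∫ t in Ioi (0 : ℝ), t ^ (-(1 / 2) : ℝ) • (a * Ring.inverse (a + t • 1)) := by
  have half_mem : (1 / 2 : ℝ) ∈ Ioo 0 1 := by norm_num
  rw [show (-(1 / 2) : ℝ) = 1 / 2 - 1 by norm_num]
  refine ⟨integrableOn_rpow_smul_mul_ringInverse half_mem ha, ?_⟩
  rw [integral_rpow_smul_mul_ringInverse half_mem ha, integral_rpowIntegrand₀₁_one_half_one,
    CFC.sqrt_eq_rpow, smul_smul, one_div_mul_cancel pi_ne_zero, one_smul]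

end RpowIntegral

/-- For a positive bounded operator `A` and `ψ ∈ H`, the function
`λ ↦ λ^{-1/2} A(A + λ)⁻¹ ψ` is Bochner integrable on `(0,∞)` and
`A^{1/2} ψ = (1/π) ∫₀^∞ λ^{-1/2} A (A + λ)⁻¹ ψ dλ`. -/
theorem sqrt_integral_representation {H : Type*} [NormedAddCommGroup H]
    [InnerProductSpace ℂ H] [CompleteSpace H] (A : H →L[ℂ] H) (hA : 0 ≤ A) (ψ : H) :
    IntegrableOn
      (fun lam : ℝ => lam ^ (-(1 / 2) : ℝ) • (A * Ring.inverse (A + lam • 1)) ψ)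
      (Set.Ioi (0 : ℝ)) ∧
    CFC.sqrt A ψ = (1 / Real.pi)
      • ∫ lam in Set.Ioi (0 : ℝ),
          lam ^ (-(1 / 2) : ℝ) • (A * Ring.inverse (A + lam • 1)) ψ := by
  obtain ⟨integrable, sqrt_eq⟩ := sqrt_integral_representation_general hA
  exact ⟨integrable.apply_continuousLinearMap ψ, (DFunLike.congr_fun sqrt_eq ψ).trans <|
    congrArg ((1 / Real.pi) • ·) (ContinuousLinearMap.integral_apply integrable ψ)⟩
end
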